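/- arXiv:1403.4344 — 10 statements merged into one kernel-verified Lean document; each statement's English description precedes it below -/
import Mathlib

section
/- Let H be a finite-dimensional complex inner product space, U a unitary operator on H, P an orthogonal projection on H, and ψ₀ ∈ H. If the set Z = {n ∈ ℕ | P U^n ψ₀ = 0} is infinite, then there exist integers p ≥ 1 and r ≥ 0 such that P U^{p n + r} ψ₀ = 0 for every n ∈ ℕ (i.e., Z contains the full arithmetic progression {p n + r : n ∈ ℕ}). -/
open Polynomial in
/-- A polynomial over an ultrametric field with `#T` distinct roots in the closed unit ball is bounded
on that ball by the size of its coefficients of index at least `#T`. -/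
theorem norm_eval_le_of_card_roots {K : Type*} [NormedField K] [IsUltrametricDist K]
    {ε : ℝ} (hε : 0 ≤ ε) (T : Finset K) (hT : ∀ t ∈ T, ‖t‖ ≤ 1) (F : K[X])
    (hroot : ∀ t ∈ T, F.eval t = 0) (hcoeff : ∀ j, T.card ≤ j → ‖F.coeff j‖ ≤ ε)
    {x : K} (hx : ‖x‖ ≤ 1) : ‖F.eval x‖ ≤ ε := by
  classical
  induction T using Finset.induction_on generalizing F with
  | empty =>
    rw [eval_eq_sum_range]
    refine IsUltrametricDist.norm_sum_le_of_forall_le_of_nonneg hε fun i _ => ?_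
    rw [norm_mul, norm_pow]
    exact (mul_le_of_le_one_right (norm_nonneg _) (pow_le_one₀ (norm_nonneg _) hx)).trans
      (hcoeff i (by simp))
  | insert t T ht ih =>
    have hF : (X - C t) * (F /ₘ (X - C t)) = F :=
      mul_divByMonic_eq_iff_isRoot.2 (hroot t (by simp))
    have htn : ‖t‖ ≤ 1 := hT t (by simp)
    have hQ : ‖(F /ₘ (X - C t)).eval x‖ ≤ ε := by
      refine ih (fun s hs => hT s (by simp [hs])) _ (fun s hs => ?_) fun j hj => ?_
      · have h := hroot s (by simp [hs])
        rw [← hF, eval_mul] at h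
        refine (mul_eq_zero.1 h).resolve_left ?_
        simpa [sub_eq_zero] using fun h : s = t => ht (h ▸ hs)
      · rw [coeff_divByMonic_X_sub_C]
        refine IsUltrametricDist.norm_sum_le_of_forall_le_of_nonneg hε fun i hi => ?_
        rw [norm_mul, norm_pow]
        refine (mul_le_of_le_one_left (norm_nonneg _)
          (pow_le_one₀ (norm_nonneg _) htn)).trans (hcoeff i ?_)
        rw [Finset.card_insert_of_notMem ht]
        have := (Finset.mem_Icc.1 hi).1
        omega
    rw [← hF, eval_mul, norm_mul]
    refine (mul_le_of_le_one_left (norm_nonneg _) ?_).trans hQ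
    rw [eval_sub, eval_X, eval_C, sub_eq_add_neg]
    exact (IsUltrametricDist.norm_add_le_max _ _).trans (max_le hx (by simpa using htn))

theorem Padic.norm_sq_pow_div_factorial_le (p : ℕ) [Fact p.Prime] (i : ℕ) :
    ‖((p : ℚ_[p]) ^ 2) ^ i / (i.factorial : ℚ_[p])‖ ≤ ((p : ℝ)⁻¹) ^ i := by
  have hp : (1 : ℝ) < p := by exact_mod_cast (Fact.out : p.Prime).one_lt
  have hne : ((i.factorial : ℕ) : ℚ_[p]) ≠ 0 := by exact_mod_cast i.factorial_ne_zero
  have hfac : ((p : ℝ)⁻¹) ^ i ≤ ‖(i.factorial : ℚ_[p])‖ := by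
    rw [Padic.norm_eq_zpow_neg_valuation hne, Padic.valuation_natCast, zpow_neg, zpow_natCast,
      inv_pow]
    exact inv_anti₀ (by positivity) (pow_le_pow_right₀ hp.le (padicValNat_factorial_le p i))
  rw [norm_div, norm_pow, norm_pow, Padic.norm_p, div_le_iff₀ (norm_pos_iff.2 hne), ← pow_mul,
    mul_comm 2, pow_mul, sq]
  gcongr

open Polynomial in
/-- A Newton series `∑ choose(n, i) p^(2i) d_i` with coefficients in `ℤ_[p]` that vanishes at
infinitely many natural numbers vanishes at all of them. -/
theorem PadicInt.newton_series_eq_zero {p : ℕ} [Fact p.Prime] (d : ℕ → ℤ_[p])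
    (h : {n : ℕ | ∑ i ∈ Finset.range (n + 1), (n.choose i : ℤ_[p]) * ((p : ℤ_[p]) ^ 2) ^ i * d i
      = 0}.Infinite) (n : ℕ) :
    ∑ i ∈ Finset.range (n + 1), (n.choose i : ℤ_[p]) * ((p : ℤ_[p]) ^ 2) ^ i * d i = 0 := by
  set b : ℕ → ℤ_[p] := fun n =>
    ∑ i ∈ Finset.range (n + 1), (n.choose i : ℤ_[p]) * ((p : ℤ_[p]) ^ 2) ^ i * d i with hb
  change b n = 0
  have hp : (1 : ℝ) < p := by exact_mod_cast (Fact.out : p.Prime).one_lt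
  have hr : (p : ℝ)⁻¹ < 1 := inv_lt_one_of_one_lt₀ hp
  have hr0 : 0 ≤ (p : ℝ)⁻¹ := by positivity
  suffices hk : ∀ k : ℕ, ‖b n‖ ≤ ((p : ℝ)⁻¹) ^ k by
    exact norm_le_zero_iff.1 (ge_of_tendsto' (tendsto_pow_atTop_nhds_zero_of_lt_one hr0 hr) hk)
  intro k
  obtain ⟨T, hTsub, hTcard⟩ := h.exists_subset_card_eq k
  set m := max n (T.sup id)
  let F : ℚ_[p][X] := ∑ i ∈ Finset.range (m + 1),
    C (((p : ℚ_[p]) ^ 2) ^ i / (i.factorial : ℚ_[p]) * d i) * descPochhammer ℚ_[p] i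
  have heval : ∀ t ≤ m, F.eval (t : ℚ_[p]) = (b t : ℚ_[p]) := by
    intro t ht
    simp only [F, eval_finsetSum, eval_mul, eval_C, descPochhammer_eval_eq_descFactorial, hb,
      PadicInt.coe_sum, PadicInt.coe_mul, PadicInt.coe_pow, PadicInt.coe_natCast]
    symm
    refine (Finset.sum_subset (Finset.range_subset_range.2 (by omega)) fun i _ hi => ?_).trans
      (Finset.sum_congr rfl fun i _ => ?_)
    · rw [Nat.choose_eq_zero_of_lt (by simpa using hi)]
      simp
    · have hne : ((i.factorial : ℕ) : ℚ_[p]) ≠ 0 := by exact_mod_cast i.factorial_ne_zero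
      rw [Nat.descFactorial_eq_factorial_mul_choose]
      push_cast
      field_simp
  have hpoch : ∀ i j, ‖(descPochhammer ℚ_[p] i).coeff j‖ ≤ 1 := by
    intro i j
    rw [← descPochhammer_map (Int.castRingHom ℚ_[p]), coeff_map]
    exact Padic.norm_int_le_one _
  have hcoeff : ∀ j, k ≤ j → ‖F.coeff j‖ ≤ ((p : ℝ)⁻¹) ^ k := by
    intro j hj
    simp only [F, finsetSum_coeff, coeff_C_mul]
    refine IsUltrametricDist.norm_sum_le_of_forall_le_of_nonneg (by positivity) fun i _ => ?_
    rcases lt_or_ge i j with hij | hij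
    · rw [coeff_eq_zero_of_natDegree_lt (by rwa [descPochhammer_natDegree])]
      simp
    · rw [norm_mul, norm_mul]
      calc _ ≤ ((p : ℝ)⁻¹) ^ i * 1 * 1 := by
            gcongr
            · exact Padic.norm_sq_pow_div_factorial_le p i
            · exact (d i).norm_le_one
            · exact hpoch i j
        _ ≤ _ := by
            simpa using pow_le_pow_of_le_one hr0 hr.le (hj.trans hij)
  have hnat : ∀ t : ℕ, ‖(t : ℚ_[p])‖ ≤ 1 := fun t => by
    simpa using Padic.norm_int_le_one (p := p) t
  have hn := norm_eval_le_of_card_roots (ε := ((p : ℝ)⁻¹) ^ k) (by positivity)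
    (T.map (Nat.castEmbedding : ℕ ↪ ℚ_[p])) (by simp [hnat]) F ?_ ?_
    (hnat n)
  · rwa [heval n (le_max_left _ _)] at hn
  · intro t ht
    obtain ⟨s, hs, rfl⟩ := Finset.mem_map.1 ht
    rw [Nat.castEmbedding_apply, heval s ((Finset.le_sup (f := id) hs).trans (le_max_right _ _))]
    have : b s = 0 := hTsub hs
    simp [this]
  · simpa [hTcard] using hcoeff

theorem exists_pow_eq_one_add_smul {p : ℕ} [Fact p.Prime] {E : Type*} [Ring E]
    [Algebra ℤ_[p] E] [Module.Free ℤ_[p] E] [Module.Finite ℤ_[p] E] (A : Eˣ) :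
    ∃ N : ℕ, 1 ≤ N ∧ ∃ B : E, (A : E) ^ N = 1 + ((p : ℤ_[p]) ^ 2) • B := by
  let b := Module.Free.chooseBasis ℤ_[p] E
  have : NeZero (p ^ 2) := ⟨pow_ne_zero 2 (Fact.out : p.Prime).ne_zero⟩
  obtain ⟨i, j, hij, h⟩ : ∃ i j : ℕ, i < j ∧
      (fun c => PadicInt.toZModPow 2 (b.repr ((A : E) ^ i) c)) =
        fun c => PadicInt.toZModPow 2 (b.repr ((A : E) ^ j) c) := by
    obtain ⟨i, j, hij, h⟩ := Finite.exists_ne_map_eq_of_infinite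
      fun (n : ℕ) c => PadicInt.toZModPow 2 (b.repr ((A : E) ^ n) c)
    rcases hij.lt_or_gt with hlt | hlt
    exacts [⟨i, j, hlt, h⟩, ⟨j, i, hlt, h.symm⟩]
  have hdvd : ∀ c, ∃ y, b.repr ((A : E) ^ j - (A : E) ^ i) c = (p : ℤ_[p]) ^ 2 * y := by
    intro c
    have hc : b.repr ((A : E) ^ j - (A : E) ^ i) c ∈ RingHom.ker (PadicInt.toZModPow (p := p) 2) := by
      rw [RingHom.mem_ker, map_sub, Finsupp.sub_apply, map_sub, sub_eq_zero]
      exact (congrFun h c).symm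
    rw [PadicInt.ker_toZModPow] at hc
    exact Ideal.mem_span_singleton.1 hc
  choose y hy using hdvd
  have hsub : (A : E) ^ j - (A : E) ^ i = ((p : ℤ_[p]) ^ 2) • ∑ c, y c • b c := by
    rw [← b.sum_repr ((A : E) ^ j - (A : E) ^ i), Finset.smul_sum]
    exact Finset.sum_congr rfl fun c _ => by rw [hy, mul_smul]
  refine ⟨j - i, by omega, (↑(A⁻¹ ^ i) : E) * ∑ c, y c • b c, ?_⟩
  rw [← mul_smul_comm, ← hsub, mul_sub]
  obtain ⟨k, rfl⟩ := Nat.exists_eq_add_of_lt hij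
  rw [← Units.val_pow_eq_pow_val, ← Units.val_pow_eq_pow_val, ← Units.val_pow_eq_pow_val,
    ← Units.val_mul, ← Units.val_mul]
  have h1 : A⁻¹ ^ i * A ^ i = 1 := by simp
  have h2 : A⁻¹ ^ i * A ^ (i + k + 1) = A ^ (i + k + 1 - i) := by
    rw [add_assoc, pow_add, ← mul_assoc, h1, one_mul, Nat.add_sub_cancel_left]
  rw [h1, h2]
  simp

theorem exists_infinite_residue {Z : Set ℕ} (hZ : Z.Infinite) {N : ℕ} (hN : 1 ≤ N) :
    ∃ r, {m : ℕ | N * m + r ∈ Z}.Infinite := by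
  by_contra! h
  refine hZ (((Set.finite_lt_nat N).biUnion fun r _ =>
    (h r).image fun m => N * m + r).subset fun n hn => ?_)
  simp only [Set.mem_iUnion]
  exact ⟨n % N, Nat.mod_lt _ hN, n / N, by simpa [Nat.div_add_mod] using hn, Nat.div_add_mod n N⟩

/-- Skolem–Mahler–Lech for linear images of the powers of a unit in a finite free
`ℤ_[p]`-algebra. -/
theorem exists_progression_of_padicInt_algebra {p : ℕ} [Fact p.Prime] {E M : Type*} [Ring E]
    [Algebra ℤ_[p] E] [Module.Free ℤ_[p] E] [Module.Finite ℤ_[p] E] [AddCommGroup M]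
    [Module ℤ_[p] M] [Module.Free ℤ_[p] M] (A : Eˣ) (f : E →ₗ[ℤ_[p]] M)
    (h : {n : ℕ | f ((A : E) ^ n) = 0}.Infinite) :
    ∃ N r : ℕ, 1 ≤ N ∧ ∀ n, f ((A : E) ^ (N * n + r)) = 0 := by
  obtain ⟨N, hN, B, hB⟩ := exists_pow_eq_one_add_smul (p := p) A
  obtain ⟨r, hr⟩ := exists_infinite_residue h hN
  refine ⟨N, r, hN, fun n => ?_⟩
  let b := Module.Free.chooseBasis ℤ_[p] M
  refine b.ext_elem fun c => ?_
  have hexp : ∀ m, b.repr (f ((A : E) ^ (N * m + r))) c =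
      ∑ i ∈ Finset.range (m + 1), (m.choose i : ℤ_[p]) * ((p : ℤ_[p]) ^ 2) ^ i *
        b.repr (f (B ^ i * (A : E) ^ r)) c := by
    intro m
    rw [pow_add, pow_mul, hB, add_comm, (Commute.one_right _).add_pow, Finset.sum_mul, map_sum,
      map_sum, Finsupp.finsetSum_apply]
    refine Finset.sum_congr rfl fun i _ => ?_
    have : (((p : ℤ_[p]) ^ 2) • B) ^ i * 1 ^ (m - i) * (m.choose i : E) * (A : E) ^ r =
        ((m.choose i : ℤ_[p]) * ((p : ℤ_[p]) ^ 2) ^ i) • (B ^ i * (A : E) ^ r) := by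
      rw [one_pow, mul_one, smul_pow, mul_smul, Nat.cast_smul_eq_nsmul, nsmul_eq_mul,
        ← Nat.cast_comm, mul_assoc, smul_mul_assoc]
    rw [this, map_smul, map_smul, Finsupp.smul_apply, smul_eq_mul]
  rw [hexp, PadicInt.newton_series_eq_zero (fun i => b.repr (f (B ^ i * (A : E) ^ r)) c)]
  · simp
  · refine hr.mono fun m hm => ?_
    have hm' : f ((A : E) ^ (N * m + r)) = 0 := hm
    rw [Set.mem_ofPred_eq, ← hexp, hm']
    simp

theorem Padic.exists_algebraicIndependent_padicInt (p : ℕ) [Fact p.Prime] (s : ℕ) :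
    ∃ y : Fin s → ℤ_[p], AlgebraicIndependent ℚ fun i => (y i : ℚ_[p]) := by
  let t : Set ℚ_[p] := Set.range ((↑) : ℤ_[p] → ℚ_[p])
  have htop : Algebra.adjoin ℚ t = ⊤ := by
    refine eq_top_iff.2 fun x _ => ?_
    obtain ⟨n, hn⟩ := pow_unbounded_of_one_lt ‖x‖
      (show (1 : ℝ) < p by exact_mod_cast (Fact.out : p.Prime).one_lt)
    have hp0 : (p : ℚ_[p]) ≠ 0 := by exact_mod_cast (Fact.out : p.Prime).ne_zero
    have hle : ‖(p : ℚ_[p]) ^ n * x‖ ≤ 1 := by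
      rw [norm_mul, norm_pow, Padic.norm_p, inv_pow]
      exact inv_mul_le_one_of_le₀ hn.le (by positivity)
    have hx : x = (((p : ℚ) ^ n)⁻¹) • ((p : ℚ_[p]) ^ n * x) := by
      rw [Algebra.smul_def]
      push_cast [map_inv₀, map_pow, map_natCast]
      field_simp
    have hmem : (p : ℚ_[p]) ^ n * x ∈ t := ⟨⟨_, hle⟩, rfl⟩
    rw [hx]
    exact Subalgebra.smul_mem _ (Algebra.subset_adjoin hmem) _
  have halg : Algebra.IsAlgebraic (Algebra.adjoin ℚ t) ℚ_[p] :=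
    ⟨fun x => isAlgebraic_algebraMap
      (⟨x, htop ▸ Algebra.mem_top⟩ : Algebra.adjoin ℚ t)⟩
  obtain ⟨u, -, hut, hu⟩ := exists_isTranscendenceBasis_between (R := ℚ) ∅ t (Set.empty_subset _)
    ((algebraicIndependent_empty_iff ℚ ℚ_[p]).mpr (FaithfulSMul.algebraMap_injective ℚ ℚ_[p]))
  have hinf : u.Infinite := by
    intro hfin
    have := hu.isAlgebraic
    have hc : Cardinal.mk (Algebra.adjoin ℚ (Set.range ((↑) : u → ℚ_[p]))) ≤ Cardinal.aleph0 := by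
      refine (Algebra.cardinalMk_adjoin_le ℚ _).trans ?_
      have := hfin.countable
      simp [this]
    have h1 := Algebra.IsAlgebraic.cardinalMk_le_max
      (Algebra.adjoin ℚ (Set.range ((↑) : u → ℚ_[p]))) ℚ_[p]
    have h2 := continuum_le_cardinal_of_nontriviallyNormedField ℚ_[p]
    exact absurd (h2.trans (h1.trans (max_le hc le_rfl))) (not_le.2 Cardinal.aleph0_lt_continuum)
  have := hinf.to_subtype
  let e : Fin s ↪ u := Fin.valEmbedding.trans (Infinite.natEmbedding u)
  choose y hy using fun i => hut (e i).2
  refine ⟨y, ?_⟩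
  simp only [hy]
  exact hu.1.comp e e.injective

/-- Extension of an embedding into an algebraically closed field along an integral extension. -/
theorem RingHom.IsIntegral.exists_injective_extension {A R L : Type*} [CommRing A] [IsDomain A]
    [CommRing R] [IsDomain R] [Field L] [IsAlgClosed L] {g : A →+* R} (hg : g.IsIntegral)
    (hginj : Function.Injective g) {h : A →+* L} (hinj : Function.Injective h) :
    ∃ φ : R →+* L, Function.Injective φ ∧ φ.comp g = h := by
  let := g.toAlgebra
  let := h.toAlgebra
  have : FaithfulSMul A R := (faithfulSMul_iff_algebraMap_injective A R).2 hginj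
  have : FaithfulSMul A L := (faithfulSMul_iff_algebraMap_injective A L).2 hinj
  have : Algebra.IsIntegral A R := ⟨hg⟩
  let φ : R →ₐ[A] L := IsAlgClosed.lift
  have hcomp : (φ : R →+* L).comp g = h := φ.comp_algebraMap
  refine ⟨φ, (RingHom.injective_iff_ker_eq_bot _).2 ?_, hcomp⟩
  refine Ideal.eq_bot_of_comap_eq_bot (R := A) ?_
  change Ideal.comap g (RingHom.ker (φ : R →+* L)) = ⊥
  rw [RingHom.comap_ker, hcomp]
  exact (RingHom.injective_iff_ker_eq_bot _).1 hinj

theorem Padic.aeval_mem_range_of_not_dvd_den {p : ℕ} [Fact p.Prime] {σ : Type*} (y : σ → ℤ_[p])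
    (c : MvPolynomial σ ℚ) (hc : ∀ m, ¬ p ∣ (c.coeff m).den) :
    ∃ z : ℤ_[p], (z : ℚ_[p]) = MvPolynomial.aeval (fun i => (y i : ℚ_[p])) c := by
  refine ⟨⟨_, ?_⟩, rfl⟩
  rw [MvPolynomial.aeval_def, MvPolynomial.eval₂_eq]
  refine IsUltrametricDist.norm_sum_le_of_forall_le_of_nonneg zero_le_one fun m _ => ?_
  rw [norm_mul, norm_prod]
  refine mul_le_one₀ (Padic.norm_rat_le_one (hc m)) (by positivity) ?_
  refine Finset.prod_le_one (fun _ _ => norm_nonneg _) fun i _ => ?_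
  rw [norm_pow]
  exact pow_le_one₀ (norm_nonneg _) (y i).norm_le_one

theorem Polynomial.exists_prime_not_dvd_den {ι σ : Type*} [Finite ι]
    (q : ι → Polynomial (MvPolynomial σ ℚ)) :
    ∃ p : ℕ, p.Prime ∧ ∀ i j m, ¬ p ∣ (((q i).coeff j).coeff m).den := by
  have := Fintype.ofFinite ι
  obtain ⟨p, hp, hprime⟩ := Nat.exists_infinite_primes ((Finset.univ.sup fun i =>
    (q i).support.sup fun j => ((q i).coeff j).support.sup fun m =>
      (((q i).coeff j).coeff m).den) + 1)
  refine ⟨p, hprime, fun i j m hdvd => ?_⟩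
  by_cases hm : ((q i).coeff j).coeff m = 0
  · rw [hm] at hdvd
    exact hprime.one_lt.ne' (Nat.dvd_one.1 hdvd)
  have hj : (q i).coeff j ≠ 0 := fun h => hm (by simp [h])
  have h1 := Finset.le_sup (f := fun m => (((q i).coeff j).coeff m).den)
    (MvPolynomial.mem_support_iff.2 hm)
  have h2 := Finset.le_sup (f := fun j => ((q i).coeff j).support.sup fun m =>
    (((q i).coeff j).coeff m).den) (Polynomial.mem_support_iff.2 hj)
  have h3 := Finset.le_sup (f := fun i => (q i).support.sup fun j =>
    ((q i).coeff j).support.sup fun m => (((q i).coeff j).coeff m).den) (Finset.mem_univ i)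
  have h4 := Nat.le_of_dvd (Rat.den_pos _) hdvd
  omega

theorem exists_integral_embedding_padic {K : Type*} [Field K] [CharZero K] {G : Set K}
    (hG : G.Finite) :
    ∃ (p : ℕ) (_ : Fact p.Prime) (φ : Algebra.adjoin ℚ G →+* AlgebraicClosure ℚ_[p]),
      Function.Injective φ ∧
        ∀ a : G, IsIntegral ℤ_[p] (φ ⟨a, Algebra.subset_adjoin a.2⟩) := by
  have : Finite G := hG
  have : Algebra.FiniteType ℚ (Algebra.adjoin ℚ G) :=
    (Subalgebra.fg_iff_finiteType _).1 (Subalgebra.fg_def.2 ⟨G, hG, rfl⟩)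
  obtain ⟨s, g, hginj, hgint⟩ := exists_integral_inj_algHom_of_fg ℚ (Algebra.adjoin ℚ G)
  choose q hqmonic hqroot using
    fun a : G => hgint (⟨a, Algebra.subset_adjoin a.2⟩ : Algebra.adjoin ℚ G)
  obtain ⟨p, hprime, hden⟩ := Polynomial.exists_prime_not_dvd_den q
  have : Fact p.Prime := ⟨hprime⟩
  obtain ⟨y, hy⟩ := Padic.exists_algebraicIndependent_padicInt p s
  obtain ⟨h, hh⟩ : ∃ h : MvPolynomial (Fin s) ℚ →+* AlgebraicClosure ℚ_[p], ∀ c,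
      h c = algebraMap ℚ_[p] _ (MvPolynomial.aeval (fun i => (y i : ℚ_[p])) c) :=
    ⟨(algebraMap ℚ_[p] _).comp (MvPolynomial.aeval fun i => (y i : ℚ_[p])).toRingHom,
      fun _ => rfl⟩
  have hinj : Function.Injective h := fun c d hcd =>
    algebraicIndependent_iff_injective_aeval.1 hy
      ((algebraMap ℚ_[p] (AlgebraicClosure ℚ_[p])).injective (by rw [← hh, ← hh, hcd]))
  obtain ⟨φ, hφinj, hφ⟩ := RingHom.IsIntegral.exists_injective_extension hgint hginj hinj
  refine ⟨p, this, φ, hφinj, fun a => ?_⟩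
  have hlift : (q a).map h ∈ Polynomial.lifts (algebraMap ℤ_[p] (AlgebraicClosure ℚ_[p])) := by
    rw [Polynomial.lifts_iff_coeff_lifts]
    intro j
    obtain ⟨z, hz⟩ := Padic.aeval_mem_range_of_not_dvd_den y ((q a).coeff j) (hden a j)
    refine ⟨z, ?_⟩
    rw [Polynomial.coeff_map, hh, ← hz,
      IsScalarTower.algebraMap_apply ℤ_[p] ℚ_[p] (AlgebraicClosure ℚ_[p])]
    rfl
  obtain ⟨Q, hQ, -, hQmonic⟩ :=
    Polynomial.lifts_and_degree_eq_and_monic hlift ((hqmonic a).map h)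
  refine ⟨Q, hQmonic, ?_⟩
  rw [← Polynomial.eval_map, hQ, Polynomial.eval_map, ← hφ, ← Polynomial.hom_eval₂]
  exact (congrArg φ (hqroot a)).trans (map_zero φ)

theorem exists_finite_free_subalgebra {A R L ι : Type*} [CommRing A] [IsDomain A]
    [IsPrincipalIdealRing A] [CommRing R] [CommRing L] [Algebra A L] [Module.IsTorsionFree A L]
    [Finite ι] {φ : R →+* L} (hφ : Function.Injective φ) {x : ι → R}
    (hint : ∀ i, IsIntegral A (φ (x i))) :
    ∃ S : Subalgebra A L, Module.Finite A S ∧ Module.Free A S ∧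
      ∃ T : Subring R, (∀ i, x i ∈ T) ∧ ∃ ψ : T →+* S, Function.Injective ψ := by
  let S := Algebra.adjoin A (Set.range fun i => φ (x i))
  have hfin : Module.Finite A S := by
    refine Module.Finite.iff_fg.2 (fg_adjoin_of_finite (Set.finite_range _) ?_)
    rintro _ ⟨i, rfl⟩
    exact hint i
  refine ⟨S, hfin, Module.free_of_finite_type_torsion_free', S.toSubring.comap φ,
    fun i => Algebra.subset_adjoin (Set.mem_range_self i),
    (φ.comp (Subring.subtype _)).codRestrict S fun a => a.2, fun a b hab => ?_⟩
  exact Subtype.ext (hφ (congrArg Subtype.val hab))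

/-- Finitely many elements of a field of characteristic zero lie in a subring that embeds into a
finite free `ℤ_[p]`-algebra for some prime `p`. -/
theorem exists_embedding_padicInt_algebra {K : Type*} [Field K] [CharZero K] {G : Set K}
    (hG : G.Finite) :
    ∃ (p : ℕ) (_ : Fact p.Prime) (S : Type) (_ : CommRing S) (_ : Algebra ℤ_[p] S)
      (R : Subring K), Module.Finite ℤ_[p] S ∧ Module.Free ℤ_[p] S ∧ G ⊆ R ∧
        ∃ φ : R →+* S, Function.Injective φ := by
  obtain ⟨p, hp, φ, hφ, hint⟩ := exists_integral_embedding_padic hG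
  have : Finite G := hG
  have : Module.IsTorsionFree ℤ_[p] (AlgebraicClosure ℚ_[p]) :=
    .trans_faithfulSMul ℤ_[p] ℚ_[p] _
  obtain ⟨S, hfin, hfree, T, hT, ψ, hψ⟩ := exists_finite_free_subalgebra hφ hint
  let θ : Algebra.adjoin ℚ G →+* K := (Algebra.adjoin ℚ G).val
  let e := T.equivMapOfInjective θ Subtype.val_injective
  exact ⟨p, hp, S, inferInstance, inferInstance, T.map θ, hfin, hfree,
    fun a ha => ⟨_, hT ⟨a, ha⟩, rfl⟩, ψ.comp e.symm.toRingHom, hψ.comp e.symm.injective⟩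

open scoped Matrix

theorem RingHom.comp_mulVec_pow_mulVec {ι R S : Type*} [Fintype ι] [DecidableEq ι] [CommRing R]
    [CommRing S] (θ : R →+* S) (A P : Matrix ι ι R) (w : ι → R) (n : ℕ) :
    P.map θ *ᵥ (A.map θ ^ n *ᵥ (θ ∘ w)) = θ ∘ (P *ᵥ (A ^ n *ᵥ w)) := by
  rw [← Matrix.map_pow]
  ext i
  simp only [Function.comp_apply, RingHom.map_mulVec]
  congr 1
  ext j
  simp [RingHom.map_mulVec]

theorem RingHom.mulVec_pow_mulVec_eq_zero_iff {ι R S : Type*} [Fintype ι] [DecidableEq ι]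
    [CommRing R] [CommRing S] {θ : R →+* S} (hθ : Function.Injective θ) (A P : Matrix ι ι R)
    (w : ι → R) (n : ℕ) :
    P.map θ *ᵥ (A.map θ ^ n *ᵥ (θ ∘ w)) = 0 ↔ P *ᵥ (A ^ n *ᵥ w) = 0 := by
  rw [θ.comp_mulVec_pow_mulVec]
  simp [funext_iff, map_eq_zero_iff θ hθ]

/-- Skolem–Mahler–Lech for the orbit of a vector under an invertible matrix. -/
theorem Matrix.exists_progression_mulVec_eq_zero {K ι : Type*} [Field K] [CharZero K] [Fintype ι]
    [DecidableEq ι] (A B P : Matrix ι ι K) (hAB : A * B = 1) (w : ι → K)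
    (h : {n : ℕ | P *ᵥ (A ^ n *ᵥ w) = 0}.Infinite) :
    ∃ N r : ℕ, 1 ≤ N ∧ ∀ n, P *ᵥ (A ^ (N * n + r) *ᵥ w) = 0 := by
  let entries (M : Matrix ι ι K) : Set K := Set.range fun ij : ι × ι => M ij.1 ij.2
  let G : Set K := entries A ∪ entries B ∪ entries P ∪ Set.range w
  have hG : G.Finite := (((Set.finite_range _).union (Set.finite_range _)).union
    (Set.finite_range _)).union (Set.finite_range _)
  obtain ⟨p, _, S, _, _, R, _, _, hGR, φ, hφ⟩ :=
    exists_embedding_padicInt_algebra hG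
  let θ : R →+* K := R.subtype
  have hθ : Function.Injective θ := Subtype.val_injective
  have hmatrix : ∀ M : Matrix ι ι K, entries M ⊆ G → ∃ M' : Matrix ι ι R, M'.map θ = M :=
    fun M hM => ⟨fun i j => ⟨M i j, hGR (hM ⟨(i, j), rfl⟩)⟩, rfl⟩
  obtain ⟨A', hA⟩ := hmatrix A fun a ha => by simp [G, ha]
  obtain ⟨B', hB⟩ := hmatrix B fun a ha => by simp [G, ha]
  obtain ⟨P', hP⟩ := hmatrix P fun a ha => by simp [G, ha]
  obtain ⟨w', hw⟩ : ∃ w' : ι → R, θ ∘ w' = w :=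
    ⟨fun i => ⟨w i, hGR (by simp [G])⟩, rfl⟩
  have hAB' : A' * B' = 1 := by
    refine Matrix.map_injective hθ ?_
    simpa [Matrix.map_mul, hA, hB] using hAB
  have hθzero : ∀ n, P *ᵥ (A ^ n *ᵥ w) = 0 ↔ P' *ᵥ (A' ^ n *ᵥ w') = 0 := fun n => by
    rw [← RingHom.mulVec_pow_mulVec_eq_zero_iff hθ, hA, hP, hw]
  have hφAB : A'.map φ * B'.map φ = 1 := by
    rw [← Matrix.map_mul, hAB', Matrix.map_one _ (map_zero _) (map_one _)]
  let u : (Matrix ι ι S)ˣ := ⟨A'.map φ, B'.map φ, hφAB, mul_eq_one_comm.1 hφAB⟩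
  let f : Matrix ι ι S →ₗ[ℤ_[p]] ι → S :=
    { toFun := fun X => P'.map φ *ᵥ (X *ᵥ (φ ∘ w'))
      map_add' := fun X Y => by rw [Matrix.add_mulVec, Matrix.mulVec_add]
      map_smul' := fun c X => by rw [Matrix.smul_mulVec, Matrix.mulVec_smul]; rfl }
  have hf : ∀ n, f ((u : Matrix ι ι S) ^ n) = 0 ↔ P *ᵥ (A ^ n *ᵥ w) = 0 := fun n =>
    (RingHom.mulVec_pow_mulVec_eq_zero_iff hφ A' P' w' n).trans (hθzero n).symm
  simp only [← hf] at h ⊢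
  exact exists_progression_of_padicInt_algebra u f h

open scoped InnerProductSpace

/-- If the set `Z = {n | P U^n ψ₀ = 0}` is infinite, then it contains a full
arithmetic progression `{p n + r : n ∈ ℕ}` with `p ≥ 1`. Here `U` is a unitary operator
(a linear map preserving the inner product) on a finite-dimensional complex inner product
space, and `P` is an orthogonal projection (idempotent and self-adjoint). -/
theorem stmt_0 {H : Type*} [NormedAddCommGroup H] [InnerProductSpace ℂ H]
    [FiniteDimensional ℂ H]
    (U : H →ₗ[ℂ] H) (hU : ∀ x y : H, ⟪U x, U y⟫_ℂ = ⟪x, y⟫_ℂ)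
    (P : H →ₗ[ℂ] H) (hPidem : P ∘ₗ P = P)
    (hPsa : ∀ x y : H, ⟪P x, y⟫_ℂ = ⟪x, P y⟫_ℂ)
    (ψ₀ : H)
    (hZ : {n : ℕ | P ((U ^ n) ψ₀) = 0}.Infinite) :
    ∃ p r : ℕ, 1 ≤ p ∧ ∀ n : ℕ, P ((U ^ (p * n + r)) ψ₀) = 0 := by
  classical
  let b := Module.finBasis ℂ H
  have hinj : Function.Injective U := by
    refine (injective_iff_map_eq_zero U).2 fun x hx => ?_
    rw [← inner_self_eq_zero (𝕜 := ℂ), ← hU, hx, inner_zero_left]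
  obtain ⟨V, hV⟩ := ((Module.End.isUnit_iff U).2
    ⟨hinj, LinearMap.surjective_of_injective hinj⟩).exists_right_inv
  have hAB : LinearMap.toMatrix b b U * LinearMap.toMatrix b b V = 1 := by
    rw [← LinearMap.toMatrix_mul, hV, LinearMap.toMatrix_one]
  have key : ∀ n, LinearMap.toMatrix b b P *ᵥ (LinearMap.toMatrix b b U ^ n *ᵥ b.repr ψ₀) = 0 ↔
      P ((U ^ n) ψ₀) = 0 := by
    intro n
    rw [LinearMap.toMatrix_pow, LinearMap.toMatrix_mulVec_repr, LinearMap.toMatrix_mulVec_repr]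
    simp
  simp only [← key] at hZ ⊢
  exact Matrix.exists_progression_mulVec_eq_zero _ _ _ hAB _ hZ
end

section
/- (Skolem–Mahler–Lech) Let F be a field of characteristic 0, let d ≥ 1, let c₀, …, c_{d-1} ∈ F, and let a : ℕ → F be a sequence satisfying the linear recurrence a(n+d) = c_{d-1} a(n+d-1) + c_{d-2} a(n+d-2) + ⋯ + c₀ a(n) for all n ∈ ℕ. Then the zero set {n ∈ ℕ | a(n) = 0} is semilinear, i.e., it is the union of a finite set and finitely many arithmetic progressions of the form {a k + b : k ∈ ℕ} with a ≥ 1. -/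
/-- A subset `Z` of `ℕ` is *semilinear* if it is the union of a finite set and finitely many
arithmetic progressions `{a k + b : k ∈ ℕ}` with `a ≥ 1`. -/
def Semilinear (Z : Set ℕ) : Prop :=
  ∃ (F : Finset ℕ) (s : Finset (ℕ × ℕ)),
    (∀ q ∈ s, 1 ≤ q.1) ∧
    Z = ↑F ∪ ⋃ q ∈ s, {n : ℕ | ∃ k : ℕ, n = q.1 * k + q.2}

section
open Polynomial

/-- If `P` vanishes on `S` and its coefficients of index at least `#S` lie in `I`, then all values of
`P` lie in `I`. -/
theorem Polynomial.eval_mem_of_roots {R : Type*} [CommRing R] [IsDomain R] (I : Ideal R)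
    (S : Finset R) (P : R[X]) (hroot : ∀ s ∈ S, P.eval s = 0)
    (hcoeff : ∀ i, S.card ≤ i → P.coeff i ∈ I) (t : R) : P.eval t ∈ I := by
  classical
  induction S using Finset.induction_on generalizing P with
  | empty =>
    rw [eval_eq_sum_range]
    exact I.sum_mem fun i _ ↦ I.mul_mem_right _ (hcoeff i (by simp))
  | insert s S hs ih =>
    have hP : (X - C s) * (P /ₘ (X - C s)) = P :=
      mul_divByMonic_eq_iff_isRoot.mpr (hroot s (Finset.mem_insert_self s S))
    have hQ : (P /ₘ (X - C s)).eval t ∈ I := by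
      refine ih _ (fun u hu ↦ ?_) fun i hi ↦ ?_
      · have h := hroot u (Finset.mem_insert_of_mem hu)
        rw [← hP, eval_mul, eval_sub, eval_X, eval_C] at h
        refine (mul_eq_zero.mp h).resolve_left (sub_ne_zero.mpr ?_)
        rintro rfl
        exact hs hu
      · rw [coeff_divByMonic_X_sub_C]
        refine I.sum_mem fun j hj ↦ I.mul_mem_left _ (hcoeff j ?_)
        rw [Finset.card_insert_of_notMem hs]
        exact (Nat.add_le_add_right hi 1).trans (Finset.mem_Icc.mp hj).1
    rw [← hP, eval_mul]
    exact I.mul_mem_left _ hQ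

theorem Nat.exists_factorial_mul_eq_ordCompl_mul_pow {p : ℕ} (hp : p.Prime) (hp3 : 3 ≤ p) {i n : ℕ}
    (hin : i ≤ n) : ∃ u, i.factorial * u = ordCompl[p] n.factorial * p ^ i ∧ p ^ (i / 2) ∣ u := by
  have := Fact.mk hp
  obtain ⟨m, hm⟩ := Nat.ordCompl_dvd_ordCompl_of_dvd (Nat.factorial_dvd_factorial hin) p
  have hv := sub_one_mul_padicValNat_factorial (p := p) i
  rw [← Nat.factorization_def _ hp] at hv
  have h2 : 2 * i.factorial.factorization p ≤ i :=
    (Nat.mul_le_mul_right _ (by omega : 2 ≤ p - 1)).trans (by omega)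
  set v := i.factorial.factorization p
  refine ⟨m * p ^ (i - v), ?_, dvd_mul_of_dvd_right (pow_dvd_pow p (by omega)) _⟩
  rw [hm]
  have hi : p ^ v * (i.factorial / p ^ v) = i.factorial := Nat.ordProj_mul_ordCompl_eq_self _ p
  have hpow : p ^ i = p ^ v * p ^ (i - v) := by rw [← pow_add]; congr 1; omega
  rw [hpow]
  nth_rw 1 [← hi]
  ring

/-- A sequence `b k = ∑ j, (k choose j) * p ^ j * β j` with infinitely many zeros vanishes. -/
theorem eq_zero_of_infinite_zeros_binomial_sum {R : Type*} [CommRing R] [IsDomain R] [CharZero R]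
    [IsNoetherianRing R] {p : ℕ} (hp : p.Prime) (hp3 : 3 ≤ p) (hpR : ¬ IsUnit (p : R))
    (β b : ℕ → R) (hb : ∀ k, b k = ∑ j ∈ Finset.range (k + 1), (k.choose j : R) * (p : R) ^ j * β j)
    (hinf : {k | b k = 0}.Infinite) (t : ℕ) : b t = 0 := by
  classical
  set I : Ideal R := Ideal.span {(p : R)} with hI
  have hbot := Ideal.iInf_pow_eq_bot_of_isDomain I
    (by rwa [Ne, hI, Ideal.span_singleton_eq_top])
  suffices h : b t ∈ ⨅ e : ℕ, I ^ e by rwa [hbot, Ideal.mem_bot] at h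
  refine (Submodule.mem_iInf _).mpr fun e ↦ ?_
  obtain ⟨S, hS, hcard⟩ := hinf.exists_subset_card_eq (2 * e)
  set n := max t (S.sup id)
  have hex (i : ℕ) : ∃ u : ℕ, i ≤ n →
      (i.factorial * u = ordCompl[p] n.factorial * p ^ i ∧ p ^ (i / 2) ∣ u) := by
    by_cases hi : i ≤ n
    · obtain ⟨u, hu⟩ := Nat.exists_factorial_mul_eq_ordCompl_mul_pow hp hp3 hi
      exact ⟨u, fun _ ↦ hu⟩
    · exact ⟨0, fun h ↦ absurd h hi⟩
  choose u hu using hex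
  set D := ordCompl[p] n.factorial
  set P : R[X] := ∑ i ∈ Finset.range (n + 1), C ((u i : R) * β i) * descPochhammer R i with hPdef
  have heval (k : ℕ) (hk : k ≤ n) : P.eval (k : R) = D * b k := by
    rw [hPdef, eval_finsetSum, hb, Finset.mul_sum]
    symm
    refine Finset.sum_subset_zero_on_sdiff
      (Finset.range_subset_range.mpr (by omega)) (fun i hi ↦ ?_) fun i hi ↦ ?_
    · simp only [Finset.mem_sdiff, Finset.mem_range] at hi
      rw [eval_mul, descPochhammer_eval_eq_descFactorial,
        Nat.descFactorial_eq_zero_iff_lt.mpr (by omega)]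
      simp
    · have hi' := Finset.mem_range.mp hi
      have h : ((i.factorial * u i : ℕ) : R) = ((D * p ^ i : ℕ) : R) :=
        congrArg _ (hu i (by omega)).1
      push_cast at h
      rw [eval_mul, eval_C, descPochhammer_eval_eq_descFactorial,
        Nat.descFactorial_eq_factorial_mul_choose]
      push_cast
      linear_combination -(k.choose i : R) * β i * h
  have hmem : P.eval (t : R) ∈ I ^ e := by
    have hinj : Function.Injective (Nat.cast : ℕ → R) := Nat.cast_injective
    refine Polynomial.eval_mem_of_roots (I ^ e) (S.image (Nat.cast : ℕ → R)) P ?_ ?_ t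
    · intro s hs
      obtain ⟨k, hk, rfl⟩ := Finset.mem_image.mp hs
      rw [heval k ((Finset.le_sup (f := id) hk).trans (le_max_right _ _)),
        show b k = 0 from hS hk, mul_zero]
    · intro i hi
      rw [Finset.card_image_of_injective _ hinj, hcard] at hi
      rw [hPdef, finsetSum_coeff]
      refine Ideal.sum_mem _ fun j hj ↦ ?_
      rw [coeff_C_mul]
      rcases lt_or_ge j i with hji | hij
      · rw [coeff_eq_zero_of_natDegree_lt (by rwa [descPochhammer_natDegree]), mul_zero]
        exact zero_mem _
      · refine Ideal.mul_mem_right _ _ (Ideal.mul_mem_right _ _ ?_)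
        rw [hI, Ideal.span_singleton_pow, Ideal.mem_span_singleton]
        have h : p ^ e ∣ u j := (pow_dvd_pow p (by omega)).trans
          (hu j (by have := Finset.mem_range.mp hj; omega)).2
        exact_mod_cast Nat.cast_dvd_cast (α := R) h
  rw [heval t (le_max_left _ _)] at hmem
  have hcop : IsCoprime (p ^ e : ℤ) (D : ℤ) := by
    have h : Nat.Coprime (p ^ e) D :=
      (Nat.coprime_ordCompl hp n.factorial_ne_zero).pow_left e
    exact_mod_cast h.isCoprime
  obtain ⟨x, y, hxy⟩ := hcop
  have hxy' : (x : R) * (p : R) ^ e + y * D = 1 := by exact_mod_cast congrArg (Int.cast : ℤ → R) hxy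
  have hsplit : b t = x * b t * (p : R) ^ e + y * (D * b t) := by
    linear_combination -(b t) * hxy'
  rw [hsplit]
  exact add_mem (Ideal.mul_mem_left _ _ (Ideal.pow_mem_pow (Ideal.mem_span_singleton_self _) e))
    (Ideal.mul_mem_left _ _ hmem)

theorem Polynomial.Monic.exists_dvd_X_pow_sub_one {W : Type*} [CommRing W] [Finite W] {χ : W[X]}
    (hχ : χ.Monic) (h0 : IsUnit (χ.coeff 0)) : ∃ N, 1 ≤ N ∧ χ ∣ X ^ N - 1 := by
  have := hχ.finite_adjoinRoot
  have : Finite (AdjoinRoot χ) := Module.finite_of_finite W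
  have hroot : IsUnit (AdjoinRoot.root χ) := by
    have h : AdjoinRoot.mk χ χ.divX * AdjoinRoot.root χ + AdjoinRoot.of χ (χ.coeff 0) = 0 := by
      have h := congrArg (AdjoinRoot.mk χ) (divX_mul_X_add χ)
      simpa using h
    have h' : AdjoinRoot.root χ * (-AdjoinRoot.mk χ χ.divX) = AdjoinRoot.of χ (χ.coeff 0) := by
      linear_combination -h
    exact isUnit_of_mul_isUnit_left (h' ▸ h0.map _)
  obtain ⟨u, hu⟩ := hroot
  refine ⟨Nat.card (AdjoinRoot χ)ˣ, Nat.card_pos, ?_⟩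
  rw [← AdjoinRoot.mk_eq_zero, map_sub, map_pow, AdjoinRoot.mk_X, map_one, ← hu,
    ← Units.val_pow_eq_pow_val, pow_card_eq_one', Units.val_one, sub_self]

theorem Polynomial.Monic.exists_dvd_X_pow_sub {R : Type*} [CommRing R] (π : R)
    (W : Subring (R ⧸ Ideal.span {π})) [Finite W] {χ : R[X]} (hχ : χ.Monic)
    (hW : ∀ i, Ideal.Quotient.mk (Ideal.span {π}) (χ.coeff i) ∈ W) {y : R}
    (hy : χ.coeff 0 * y = 1) (hyW : Ideal.Quotient.mk (Ideal.span {π}) y ∈ W) :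
    ∃ N, 1 ≤ N ∧ ∃ h : R[X], χ ∣ X ^ N - (C π * h + 1) := by
  set φ := Ideal.Quotient.mk (Ideal.span {π})
  have hsub : (↑(χ.map φ).coeffs : Set (R ⧸ Ideal.span {π})) ⊆ W := by
    intro x hx
    obtain ⟨i, -, rfl⟩ := mem_coeffs_iff.mp hx
    rw [coeff_map]
    exact hW i
  obtain ⟨N, hN, hdvd⟩ := ((monic_toSubring _ W hsub).mpr (hχ.map φ)).exists_dvd_X_pow_sub_one <| by
    refine IsUnit.of_mul_eq_one ⟨φ y, hyW⟩ (Subtype.ext ?_)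
    rw [Subring.coe_mul, coeff_toSubring, coeff_map, ← map_mul, hy, map_one, Subring.coe_one]
  replace hdvd := Polynomial.map_dvd W.subtype hdvd
  rw [map_toSubring] at hdvd
  obtain ⟨q, hq⟩ := hdvd
  obtain ⟨q, rfl⟩ := map_surjective φ Ideal.Quotient.mk_surjective q
  have hp : C π ∣ X ^ N - 1 - χ * q := by
    rw [C_dvd_iff_dvd_coeff]
    intro i
    rw [← Ideal.mem_span_singleton, ← Ideal.Quotient.eq_zero_iff_mem]
    change φ _ = 0
    rw [← coeff_map]
    simp only [Polynomial.map_sub, Polynomial.map_pow, Polynomial.map_X, Polynomial.map_one,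
      Polynomial.map_mul] at hq ⊢
    rw [hq, sub_self, coeff_zero]
  obtain ⟨h, hh⟩ := hp
  exact ⟨N, hN, h, q, by linear_combination hh⟩

/-- The left shift on sequences. -/
def seqShift (R : Type*) [CommRing R] : Module.End R (ℕ → R) :=
  LinearMap.funLeft R R Nat.succ

theorem seqShift_pow_apply {R : Type*} [CommRing R] (k : ℕ) (a : ℕ → R) (n : ℕ) :
    (seqShift R ^ k) a n = a (n + k) := by
  induction k generalizing a with
  | zero => rfl
  | succ k ih =>
    rw [pow_succ, Module.End.mul_apply, ih]
    rfl

theorem exists_binomial_sum_of_dvd {R : Type*} [CommRing R] {π : R} {χ h : R[X]} {N : ℕ}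
    (hdvd : χ ∣ X ^ N - (C π * h + 1)) {a : ℕ → R} (ha : aeval (seqShift R) χ a = 0) (r : ℕ) :
    ∃ β : ℕ → R, ∀ k, a (N * k + r) =
      ∑ j ∈ Finset.range (k + 1), (k.choose j : R) * π ^ j * β j := by
  refine ⟨fun j ↦ aeval (seqShift R) (h ^ j) a r, fun k ↦ ?_⟩
  obtain ⟨q, hq⟩ := hdvd.trans (sub_dvd_pow_sub_pow (X ^ N) (C π * h + 1) k)
  have h1 : aeval (seqShift R) ((X ^ N) ^ k - (C π * h + 1) ^ k) a = 0 := by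
    rw [hq, mul_comm, map_mul, Module.End.mul_apply, ha, map_zero]
  rw [map_sub, LinearMap.sub_apply, sub_eq_zero, ← pow_mul, map_pow, aeval_X] at h1
  rw [add_comm, ← seqShift_pow_apply (N * k) a r, h1, add_pow, map_sum,
    LinearMap.sum_apply, Finset.sum_apply]
  refine Finset.sum_congr rfl fun j _ ↦ ?_
  have : (C π * h) ^ j * 1 ^ (k - j) * (k.choose j : R[X]) =
      C ((k.choose j : R) * π ^ j) * h ^ j := by
    rw [mul_pow, one_pow, C_mul, C_pow, C_eq_natCast]
    ring
  rw [this, map_mul, aeval_C, Module.End.mul_apply, Module.algebraMap_end_apply, Pi.smul_apply,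
    smul_eq_mul]

end

section
open MvPolynomial
universe u

/-- A common denominator, over a polynomial ring in finitely many algebraically independent
elements, for a finite set of elements of a field. -/
theorem exists_algebraicIndependent_isIntegralElem_mul {F : Type u} [Field F] [CharZero F]
    (B : Finset F) : ∃ (ι : Type u) (_ : Finite ι) (t : ι → F),
      AlgebraicIndependent ℤ t ∧ ∃ Y : MvPolynomial ι ℤ, Y ≠ 0 ∧
        ∀ x ∈ B, (aeval t : _ →ₐ[ℤ] F).toRingHom.IsIntegralElem (aeval t Y * x) := by
  classical
  set A := Algebra.adjoin ℤ (B : Set F)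
  set S : Set A := Subtype.val ⁻¹' (B : Set F) with hS
  have hSfin : S.Finite := B.finite_toSet.preimage Subtype.val_injective.injOn
  have htop : Algebra.adjoin ℤ S = ⊤ := Algebra.adjoin_adjoin_coe_preimage
  have : Algebra.IsAlgebraic (Algebra.adjoin ℤ S) A :=
    ⟨fun x ↦ isAlgebraic_algebraMap (⟨x, htop ▸ Algebra.mem_top⟩ : Algebra.adjoin ℤ S)⟩
  obtain ⟨T, hTS, hT⟩ := exists_isTranscendenceBasis_subset (R := ℤ) S
  have hTfin : Finite T := hSfin.subset hTS
  have halg := hT.isAlgebraic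
  obtain ⟨y, hy, hyint⟩ := Algebra.IsAlgebraic.exists_integral_multiples
    (Algebra.adjoin ℤ (Set.range ((↑) : T → A))) hSfin.toFinset
  let e := hT.1.aevalEquiv
  have he (z) : aeval (fun i : T ↦ ((i : A) : F)) (e.symm z) = ((z : A) : F) := by
    have h1 : aeval ((↑) : T → A) (e.symm z) = z := by
      rw [← hT.1.algebraMap_aevalEquiv, AlgEquiv.apply_symm_apply]
      rfl
    rw [← h1, ← A.coe_val, comp_aeval_apply]
  refine ⟨T, hTfin, fun i ↦ ((i : A) : F), hT.1.map' (f := A.val) Subtype.val_injective,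
    e.symm y, by simpa using hy, fun x hx ↦ ?_⟩
  obtain ⟨P, hP, hroot⟩ := hyint ⟨x, Algebra.subset_adjoin hx⟩ (by simpa [hS] using hx)
  refine ⟨P.map e.symm.toRingEquiv.toRingHom, hP.map _, ?_⟩
  have h := congrArg A.val.toRingHom hroot
  rw [Polynomial.hom_eval₂, map_zero] at h
  rw [Polynomial.eval₂_map, he, ← h]
  congr 1
  ext z
  exact he z

/-- A finite set of elements of a field of characteristic zero lies in a Noetherian subring in which
some odd prime `p` is not invertible, and modulo `p` it generates a finite ring. -/
theorem exists_noetherian_subring_finite_mod_prime {F : Type u} [Field F] [CharZero F]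
    (B : Finset F) : ∃ (p : ℕ) (R : Subring F), p.Prime ∧ 3 ≤ p ∧ IsNoetherianRing R ∧
      ¬ IsUnit (p : R) ∧ ∃ W : Subring (R ⧸ Ideal.span {(p : R)}), Finite W ∧
        ∀ x ∈ B, ∃ hx : x ∈ R, Ideal.Quotient.mk (Ideal.span {(p : R)}) ⟨x, hx⟩ ∈ W := by
  classical
  obtain ⟨ι, _, t, ht, Y, hY, hYint⟩ := exists_algebraicIndependent_isIntegralElem_mul B
  set y : F := aeval t Y with hy
  have hy0 : y ≠ 0 := fun h ↦ hY (ht (by rw [map_zero]; exact h))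
  obtain ⟨τ, hτ⟩ : ∃ τ : ι → ℤ, eval τ Y ≠ 0 := by
    by_contra! h
    exact hY (MvPolynomial.funext fun x ↦ by rw [h x, map_zero])
  obtain ⟨p, hple, hp⟩ := Nat.exists_infinite_primes (max 3 ((eval τ Y).natAbs + 1))
  have hpY : ¬ (p : ℤ) ∣ eval τ Y := fun h ↦ by
    have := Int.natAbs_le_of_dvd_ne_zero h hτ
    have := (le_max_right _ _).trans hple
    omega
  have hp0 : (p : F) ≠ 0 := Nat.cast_ne_zero.mpr hp.ne_zero
  have hpZ : Prime (p : ℤ) := Nat.prime_iff_prime_int.mp hp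
  set t' : ι → F := fun i ↦ (t i - τ i) / p with ht'
  set G : Set F := Set.range t' ∪ {y⁻¹}
  set S := Algebra.adjoin ℤ G
  set R' := Algebra.adjoin ℤ (G ∪ B)
  have hXR (x) (hx : x ∈ B) : x ∈ R' := Algebra.subset_adjoin (Or.inr hx)
  have ht'R (i) : t' i ∈ R' := Algebra.subset_adjoin (Or.inl (Or.inl ⟨i, rfl⟩))
  have htR (i) : t i = τ i + p * t' i := by rw [ht']; field_simp; ring
  have ht'S (i) : t' i ∈ S := Algebra.subset_adjoin (Or.inl ⟨i, rfl⟩)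
  have htS (i) : t i ∈ S := by
    rw [htR]
    exact add_mem (intCast_mem _ _) (mul_mem (natCast_mem _ _) (ht'S i))
  have hSR : S ≤ R' := Algebra.adjoin_mono Set.subset_union_left
  have haevalS (f : MvPolynomial ι ℤ) : aeval t f ∈ S := by
    have h : (aeval t f : F) ∈ (aeval t : MvPolynomial ι ℤ →ₐ[ℤ] F).range := ⟨f, rfl⟩
    rw [← Algebra.adjoin_range_eq_range_aeval] at h
    exact Algebra.adjoin_le (Set.range_subset_iff.mpr htS) h
  have hyS : y⁻¹ ∈ S := Algebra.subset_adjoin (Or.inr rfl)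
  -- elements of `S` are quotients of integer polynomials in `t`, controlled at the point `τ`
  have hfrac (z : F) (hz : z ∈ S) : ∃ (k n : ℕ) (f : MvPolynomial ι ℤ),
      (p : F) ^ n * y ^ k * z = aeval t f ∧ (p : ℤ) ^ n ∣ eval τ f := by
    induction hz using Algebra.adjoin_induction with
    | mem z hz =>
      rcases hz with ⟨i, rfl⟩ | rfl
      · refine ⟨0, 1, X i - C (τ i), ?_, by simp⟩
        simp [ht']
        field_simp
      · exact ⟨1, 0, 1, by simp [hy0], by simp⟩
    | algebraMap m => exact ⟨0, 0, C m, by simp, by simp⟩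
    | add z w _ _ ihz ihw =>
      obtain ⟨k, n, f, hf, hdf⟩ := ihz
      obtain ⟨l, m, g, hg, hdg⟩ := ihw
      refine ⟨k + l, n + m, C ((p : ℤ) ^ m) * Y ^ l * f + C ((p : ℤ) ^ n) * Y ^ k * g, ?_, ?_⟩
      · simp only [map_add, map_mul, map_pow, ← hf, ← hg, ← hy, map_natCast]
        ring
      · simp only [map_add, map_mul, map_pow, map_natCast]
        rw [pow_add]
        refine dvd_add ?_ ?_
        · rw [mul_comm (_ ^ n)]
          exact mul_dvd_mul (dvd_mul_right _ _) hdf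
        · exact mul_dvd_mul (dvd_mul_right _ _) hdg
    | mul z w _ _ ihz ihw =>
      obtain ⟨k, n, f, hf, hdf⟩ := ihz
      obtain ⟨l, m, g, hg, hdg⟩ := ihw
      refine ⟨k + l, n + m, f * g, ?_, ?_⟩
      · rw [map_mul, ← hf, ← hg]
        ring
      · rw [map_mul, pow_add]
        exact mul_dvd_mul hdf hdg
  have hpS : (p : F)⁻¹ ∉ S := fun h ↦ by
    obtain ⟨k, n, f, hf, hd⟩ := hfrac _ h
    have hpoly : C ((p : ℤ) ^ n) * Y ^ k = C (p : ℤ) * f := by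
      refine ht ?_
      simp only [map_mul, map_pow, map_natCast, ← hf, ← hy]
      field_simp
    have h1 := congrArg (eval τ) hpoly
    simp only [map_mul, map_pow, map_natCast] at h1
    obtain ⟨w, hw⟩ := hd
    have h2 : (p : ℤ) ^ n * eval τ Y ^ k = (p : ℤ) ^ n * (p * w) := by
      rw [hw] at h1
      rw [h1]; ring
    exact hpY (hpZ.dvd_of_dvd_pow
      ⟨w, mul_left_cancel₀ (pow_ne_zero n (Nat.cast_ne_zero.mpr hp.ne_zero)) h2⟩)
  have hRint (z : F) (hz : z ∈ R') : IsIntegral S z := by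
    have hle : G ∪ B ⊆ ((integralClosure S F).restrictScalars ℤ : Set F) := by
      rintro z (hz | hz)
      · exact isIntegral_algebraMap (R := S) (A := F) (x := ⟨z, Algebra.subset_adjoin hz⟩)
      · have h : IsIntegral S (y * z) := by
          let f : MvPolynomial ι ℤ →+* S :=
            ((aeval t : MvPolynomial ι ℤ →ₐ[ℤ] F).codRestrict S haevalS).toRingHom
          exact RingHom.isIntegralElem.of_comp f (algebraMap S F) (hYint z hz)
        have h' := (isIntegral_algebraMap (R := S) (A := F) (x := ⟨y⁻¹, hyS⟩)).mul h
        have hz' : algebraMap S F ⟨y⁻¹, hyS⟩ * (y * z) = z := inv_mul_cancel_left₀ hy0 z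
        rwa [hz'] at h'
    exact Algebra.adjoin_le hle hz
  have hpR : (p : F)⁻¹ ∉ R' := fun h ↦ by
    have hu : IsUnit (algebraMap S (integralClosure S F) (p : S)) := by
      refine IsUnit.of_mul_eq_one ⟨(p : F)⁻¹, hRint _ h⟩ (Subtype.ext ?_)
      simp [hp0]
    have hlocal : IsLocalHom (algebraMap S (integralClosure S F)) :=
      RingHom.IsIntegral.isLocalHom (algebraMap_isIntegral_iff.mpr integralClosure.AlgebraIsIntegral)
        fun a b h ↦ Subtype.ext (congrArg (Subtype.val : integralClosure S F → F) h)
    obtain ⟨u, hu⟩ := (hlocal.map_nonunit _ hu).exists_right_inv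
    have hu' : (p : F) * u = 1 := by simpa using congrArg (Subtype.val : S → F) hu
    exact hpS (eq_inv_of_mul_eq_one_right hu' ▸ u.2)
  refine ⟨p, R'.toSubring, hp, (le_max_left _ _).trans hple, ?_, ?_, ?_⟩
  · have hfg : R'.FG := Subalgebra.fg_def.mpr
      ⟨_, ((Set.finite_range t').union (Set.finite_singleton _)).union B.finite_toSet, rfl⟩
    exact isNoetherianRing_of_fg hfg
  · intro hu
    obtain ⟨u, hu⟩ := hu.exists_right_inv
    have hu' : (p : F) * u = 1 := by simpa using congrArg (Subtype.val : R'.toSubring → F) hu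
    exact hpR (eq_inv_of_mul_eq_one_right hu' ▸ u.2)
  · set R := R'.toSubring
    set φ : R →+* R ⧸ Ideal.span {(p : R)} := Ideal.Quotient.mk _
    have hφp : φ (p : R) = 0 :=
      Ideal.Quotient.eq_zero_iff_mem.mpr (Ideal.mem_span_singleton_self _)
    let g : MvPolynomial ι ℤ →+* R :=
      ((aeval t : MvPolynomial ι ℤ →ₐ[ℤ] F).codRestrict R' fun f ↦ hSR (haevalS f)).toRingHom
    have hg : R.subtype.comp g = (aeval t : MvPolynomial ι ℤ →ₐ[ℤ] F).toRingHom := rfl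
    have hcomp : φ.comp g = (algebraMap ℤ (R ⧸ Ideal.span {(p : R)})).comp (eval τ) := by
      refine MvPolynomial.ringHom_ext (fun n ↦ by simp) fun i ↦ ?_
      have hgi : g (X i) = (τ i : R) + (p : R) * ⟨t' i, ht'R i⟩ := by
        refine Subtype.ext ?_
        change aeval t (X i) = _
        rw [aeval_X, htR i]
        simp
      rw [RingHom.comp_apply, hgi, map_add, map_mul, hφp]
      simp
    have hxint (x) (hx : x ∈ B) : IsIntegral ℤ (φ ⟨x, hXR x hx⟩) := by
      obtain ⟨P, hP, hroot⟩ := hYint x hx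
      have h0 : P.eval₂ g (g Y * ⟨x, hXR x hx⟩) = 0 := by
        refine Subtype.val_injective ?_
        change R.subtype _ = 0
        rw [Polynomial.hom_eval₂, hg]
        exact hroot
      have h1 : IsIntegral ℤ (φ (g Y * ⟨x, hXR x hx⟩)) := by
        refine RingHom.isIntegralElem.of_comp (eval τ) _ ⟨P, hP, ?_⟩
        rw [← hcomp, ← Polynomial.hom_eval₂, h0, map_zero]
      rw [map_mul, ← RingHom.comp_apply φ g, hcomp, RingHom.comp_apply] at h1
      obtain ⟨m, n, hmn⟩ := (hpZ.coprime_iff_not_dvd.mpr hpY)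
      have hmn' := congrArg (algebraMap ℤ (R ⧸ Ideal.span {(p : R)})) hmn
      rw [map_add, map_mul, map_mul, map_one, map_natCast, ← map_natCast φ, hφp, mul_zero,
        zero_add] at hmn'
      have h2 := (isIntegral_algebraMap (R := ℤ) (A := R ⧸ Ideal.span {(p : R)}) (x := n)).mul h1
      rwa [← mul_assoc, hmn', one_mul] at h2
    set V : Finset (R ⧸ Ideal.span {(p : R)}) :=
      B.attach.image fun x : {x // x ∈ B} ↦ φ ⟨x, hXR x x.2⟩
    set W := Algebra.adjoin ℤ (V : Set (R ⧸ Ideal.span {(p : R)}))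
    have hVint : ∀ v ∈ (V : Set (R ⧸ Ideal.span {(p : R)})), IsIntegral ℤ v := by
      intro v hv
      obtain ⟨x, -, rfl⟩ := Finset.mem_image.mp hv
      exact hxint x x.2
    have hfin : Module.Finite ℤ W :=
      Module.Finite.iff_fg.mpr (fg_adjoin_of_finite V.finite_toSet hVint)
    refine ⟨W.toSubring, ?_, fun x hx ↦ ⟨hXR x hx, Algebra.subset_adjoin ?_⟩⟩
    · refine Module.finite_of_fg_torsion W fun {w} ↦ ?_
      refine ⟨⟨(p : ℤ), mem_nonZeroDivisors_of_ne_zero (Nat.cast_ne_zero.mpr hp.ne_zero)⟩,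
        Subtype.ext ?_⟩
      change ((p : ℤ) • w : W).1 = 0
      have hpq : ((p : ℕ) : R ⧸ Ideal.span {(p : R)}) = 0 := by rw [← map_natCast φ, hφp]
      simp [hpq]
    · exact Finset.mem_coe.mpr (Finset.mem_image.mpr ⟨⟨x, hx⟩, Finset.mem_attach _ _, rfl⟩)

end

section
open Polynomial

/-- A sequence given by a monic recurrence with invertible constant coefficient, whose coefficients
generate a finite ring modulo `p`, vanishes on a residue class once it has infinitely many zeros
there. -/
theorem exists_modulus_forall_eq_zero {R : Type*} [CommRing R] [IsDomain R] [CharZero R]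
    [IsNoetherianRing R] {p : ℕ} (hp : p.Prime) (hp3 : 3 ≤ p) (hpR : ¬ IsUnit (p : R))
    (W : Subring (R ⧸ Ideal.span {(p : R)})) [Finite W] {χ : R[X]} (hχ : χ.Monic)
    (hW : ∀ i, Ideal.Quotient.mk (Ideal.span {(p : R)}) (χ.coeff i) ∈ W) {y : R}
    (hy : χ.coeff 0 * y = 1) (hyW : Ideal.Quotient.mk (Ideal.span {(p : R)}) y ∈ W)
    {a : ℕ → R} (ha : aeval (seqShift R) χ a = 0) :
    ∃ N, 1 ≤ N ∧ ∀ r, {k | a (N * k + r) = 0}.Infinite → ∀ k, a (N * k + r) = 0 := by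
  obtain ⟨N, hN, h, hdvd⟩ := hχ.exists_dvd_X_pow_sub (p : R) W hW hy hyW
  refine ⟨N, hN, fun r hinf ↦ ?_⟩
  obtain ⟨β, hβ⟩ := exists_binomial_sum_of_dvd hdvd ha r
  exact eq_zero_of_infinite_zeros_binomial_sum hp hp3 hpR β _ hβ hinf

/-- A set which contains every residue class modulo `N` that it meets infinitely often is
semilinear. -/
theorem semilinear_of_modulus {Z : Set ℕ} {N : ℕ} (hN : 1 ≤ N)
    (h : ∀ r, {k | N * k + r ∈ Z}.Infinite → ∀ k, N * k + r ∈ Z) : Semilinear Z := by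
  classical
  set T := (Finset.range N).filter fun r ↦ {k | N * k + r ∈ Z}.Infinite with hT
  have hfin : {n ∈ Z | n % N ∉ T}.Finite := by
    have hsub : {n ∈ Z | n % N ∉ T} ⊆ ⋃ r ∈ (Finset.range N).filter (· ∉ T),
        (fun k ↦ N * k + r) '' {k | N * k + r ∈ Z} := by
      rintro n ⟨hn, hnT⟩
      simp only [Set.mem_iUnion]
      refine ⟨n % N, by simpa using ⟨Nat.mod_lt _ hN, hnT⟩, n / N, ?_, Nat.div_add_mod n N⟩
      rwa [Set.mem_ofPred_eq, Nat.div_add_mod]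
    refine Set.Finite.subset (Set.Finite.biUnion (Finset.finite_toSet _) fun r hr ↦ ?_) hsub
    refine Set.Finite.image _ ?_
    simp only [hT, Finset.coe_filter, Finset.mem_filter, Finset.mem_range, Set.mem_ofPred_eq,
      not_and, Set.not_infinite] at hr
    exact hr.2 hr.1
  refine ⟨hfin.toFinset, T.image fun r ↦ (N, r), ?_, ?_⟩
  · intro q hq
    obtain ⟨r, -, rfl⟩ := Finset.mem_image.mp hq
    exact hN
  · ext n
    simp only [Set.Finite.coe_toFinset, Set.mem_union, Set.mem_ofPred_eq, Set.mem_iUnion,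
      Finset.mem_image, exists_prop]
    constructor
    · intro hn
      by_cases hnT : n % N ∈ T
      · exact Or.inr ⟨(N, n % N), ⟨_, hnT, rfl⟩, n / N, (Nat.div_add_mod n N).symm⟩
      · exact Or.inl ⟨hn, hnT⟩
    · rintro (⟨hn, -⟩ | ⟨_, ⟨r, hr, rfl⟩, k, rfl⟩)
      · exact hn
      · exact h r (Finset.mem_filter.mp hr).2 k

theorem Semilinear.of_preimage_succ {Z : Set ℕ} (h : Semilinear {n | n + 1 ∈ Z}) :
    Semilinear Z := by
  classical
  obtain ⟨A, s, hs, hZ⟩ := h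
  refine ⟨A.image (· + 1) ∪ if 0 ∈ Z then {0} else ∅, s.image fun q ↦ (q.1, q.2 + 1), ?_, ?_⟩
  · intro q hq
    obtain ⟨r, hr, rfl⟩ := Finset.mem_image.mp hq
    exact hs r hr
  · ext n
    rcases n with _ | n
    · by_cases h0 : 0 ∈ Z <;> simp [h0]
    · have hn := Set.ext_iff.mp hZ n
      simp only [Set.mem_ofPred_eq, Set.mem_union, Set.mem_iUnion, exists_prop] at hn
      rw [hn]
      split_ifs <;> simp [← add_assoc]

theorem semilinear_zeros_of_coeff_zero_ne_zero {F : Type*} [Field F] [CharZero F] (d : ℕ)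
    (c : Fin (d + 1) → F) (hc : c 0 ≠ 0) (a : ℕ → F)
    (hrec : ∀ n : ℕ, a (n + (d + 1)) = ∑ i : Fin (d + 1), c i * a (n + i)) :
    Semilinear {n : ℕ | a n = 0} := by
  classical
  obtain ⟨p, R, hp, hp3, hR, hpR, W, hWfin, hX⟩ := exists_noetherian_subring_finite_mod_prime
    (Finset.univ.image c ∪ (Finset.range (d + 1)).image a ∪ {(c 0)⁻¹})
  have hcX (i) := hX (c i) (by simp)
  have haX (i) (hi : i < d + 1) := hX (a i) (by
    simp only [Finset.mem_union, Finset.mem_image, Finset.mem_range]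
    exact Or.inl (Or.inr ⟨i, hi, rfl⟩))
  obtain ⟨hyR, hyW⟩ := hX (c 0)⁻¹ (by simp)
  choose hcR hcW using hcX
  have haR (n) : a n ∈ R := by
    induction n using Nat.strong_induction_on with
    | _ n ih =>
      rcases lt_or_ge n (d + 1) with hn | hn
      · exact (haX n hn).1
      · obtain ⟨m, rfl⟩ := Nat.exists_eq_add_of_le' hn
        rw [hrec]
        exact sum_mem fun i _ ↦ mul_mem (hcR i) (ih _ (by have := i.2; omega))
  let c' (i : Fin (d + 1)) : R := ⟨c i, hcR i⟩
  let a' (n : ℕ) : R := ⟨a n, haR n⟩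
  set L : R[X] := ∑ i : Fin (d + 1), C (c' i) * X ^ (i : ℕ) with hL
  have hLdeg : L.degree < (d + 1 : ℕ) := by
    refine (degree_sum_le _ _).trans_lt ((Finset.sup_lt_iff (WithBot.bot_lt_coe _)).mpr ?_)
    intro i _
    exact (degree_C_mul_X_pow_le _ _).trans_lt (by exact_mod_cast i.2)
  have hLcoeff (j : ℕ) : L.coeff j = if h : j < d + 1 then c' ⟨j, h⟩ else 0 := by
    rw [hL, finsetSum_coeff]
    simp only [coeff_C_mul_X_pow]
    split_ifs with h
    · rw [Finset.sum_eq_single ⟨j, h⟩]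
      · simp
      · intro i _ hi
        exact if_neg fun hj ↦ hi (Fin.ext hj.symm)
      · simp
    · exact Finset.sum_eq_zero fun i _ ↦ if_neg (by have := i.2; omega)
  have hχ : (X ^ (d + 1) - L).Monic := monic_X_pow_sub hLdeg
  have hann : aeval (seqShift R) (X ^ (d + 1) - L) a' = 0 := by
    ext n
    have h : a' (n + (d + 1)) = ∑ i : Fin (d + 1), c' i * a' (n + i) := by
      refine Subtype.ext ?_
      simpa [c', a'] using hrec n
    rw [map_sub, map_pow, aeval_X, LinearMap.sub_apply, Pi.sub_apply, seqShift_pow_apply, h, hL,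
      map_sum, LinearMap.sum_apply, Finset.sum_apply]
    simp [seqShift_pow_apply]
  obtain ⟨N, hN, hmod⟩ := exists_modulus_forall_eq_zero hp hp3 hpR W hχ (y := -⟨(c 0)⁻¹, hyR⟩)
    (fun i ↦ by
      rw [coeff_sub, map_sub, coeff_X_pow, hLcoeff]
      refine sub_mem ?_ ?_
      · split_ifs
        · rw [map_one]; exact one_mem _
        · rw [map_zero]; exact zero_mem _
      · split_ifs
        · exact hcW _
        · rw [map_zero]; exact zero_mem _)
    (by
      refine Subtype.ext ?_
      simp [hLcoeff, c', hc])
    (by rw [map_neg]; exact neg_mem hyW) hann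
  have hza (n) : a' n = 0 ↔ a n = 0 := Subtype.ext_iff
  simp only [hza] at hmod
  exact semilinear_of_modulus hN hmod

end

/-- **Skolem–Mahler–Lech.** In a field of characteristic 0, the zero set of a
sequence satisfying a linear recurrence is semilinear. -/
theorem stmt_1 {F : Type*} [Field F] [CharZero F]
    (d : ℕ) (hd : 1 ≤ d) (c : Fin d → F) (a : ℕ → F)
    (hrec : ∀ n : ℕ, a (n + d) = ∑ i : Fin d, c i * a (n + i)) :
    Semilinear {n : ℕ | a n = 0} := by
  clear hd
  induction d generalizing a with
  | zero =>
    have h (n) : a n = 0 := by simpa using hrec n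
    exact semilinear_of_modulus le_rfl fun r _ k ↦ h _
  | succ d ih =>
    by_cases hc : c 0 = 0
    · refine Semilinear.of_preimage_succ (ih (fun i ↦ c i.succ) (fun n ↦ a (n + 1)) fun n ↦ ?_)
      have h := hrec n
      rw [Fin.sum_univ_succ, hc, zero_mul, zero_add] at h
      simpa [add_assoc, add_comm, add_left_comm] using h
    · exact semilinear_zeros_of_coeff_zero_ne_zero d c hc a hrec
end

section
/- Let V be a finite-dimensional complex inner product space, M : V → V a linear map, and φ, ψ ∈ V. Then the set {n ∈ ℕ | ⟨φ, M^n ψ⟩ = 0} is semilinear, i.e., it is the union of a finite set and finitely many arithmetic progressions of the form {a k + b : k ∈ ℕ} with a ≥ 1. -/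
open scoped InnerProductSpace

open Polynomial Finset

open Cardinal in
/-- A set of algebraically independent `p`-adic numbers as large as the continuum. -/
theorem Padic.exists_algebraicIndependent (p : ℕ) [Fact p.Prime] {ι : Type} (hι : #ι ≤ 𝔠) :
    ∃ y : ι → ℚ_[p], AlgebraicIndependent ℚ y := by
  obtain ⟨κ, w, hw⟩ := exists_isTranscendenceBasis' ℚ ℚ_[p]
  suffices h : #ι ≤ #κ by
    obtain ⟨e⟩ := h
    exact ⟨w ∘ e, hw.1.comp e e.injective⟩
  have := hw.isAlgebraic
  have h1 : #ℚ_[p] ≤ max #(Algebra.adjoin ℚ (Set.range w)) ℵ₀ :=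
    Algebra.IsAlgebraic.cardinalMk_le_max _ _
  rw [← Cardinal.mk_congr hw.1.aevalEquiv.toEquiv] at h1
  have h2 : #(MvPolynomial κ ℚ) ≤ max (max #ℚ #κ) ℵ₀ := MvPolynomial.cardinalMk_le_max
  have h3 : 𝔠 ≤ max #κ ℵ₀ := by
    refine (continuum_le_cardinal_of_nontriviallyNormedField ℚ_[p]).trans
      (h1.trans (max_le (h2.trans ?_) (le_max_right _ _)))
    simpa using le_total _ _
  rcases le_max_iff.1 h3 with h | h
  · exact hι.trans h
  · exact absurd h aleph0_lt_continuum.not_ge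

/-- Algebraic independence is preserved by invertible affine changes of the variables. -/
theorem AlgebraicIndependent.affine {ι F K : Type*} [Field F] [Field K] [Algebra F K] {y : ι → K}
    (hy : AlgebraicIndependent F y) (a c : ι → F) (hc : ∀ i, c i ≠ 0) :
    AlgebraicIndependent F fun i => algebraMap F K (a i) + algebraMap F K (c i) * y i := by
  let f : MvPolynomial ι F →ₐ[F] MvPolynomial ι F :=
    MvPolynomial.aeval fun i => MvPolynomial.C (a i) + MvPolynomial.C (c i) * MvPolynomial.X i
  let g : MvPolynomial ι F →ₐ[F] MvPolynomial ι F :=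
    MvPolynomial.aeval fun i => MvPolynomial.C (c i)⁻¹ * (MvPolynomial.X i - MvPolynomial.C (a i))
  have hgf : g.comp f = AlgHom.id F _ := by
    ext1 i
    simp [f, g, ← mul_assoc, ← MvPolynomial.C_mul, hc i]
  have hf : Function.Injective f :=
    Function.LeftInverse.injective (g := g) fun P => DFunLike.congr_fun hgf P
  have hcomp : (MvPolynomial.aeval y).comp f =
      MvPolynomial.aeval fun i => algebraMap F K (a i) + algebraMap F K (c i) * y i := by
    ext1 i
    simp [f]
  rw [AlgebraicIndependent, ← hcomp, AlgHom.coe_comp]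
  exact Function.Injective.comp hy hf

/-- Algebraically independent elements of `ℤ_[p]` can be chosen in prescribed residue classes. -/
theorem PadicInt.exists_algebraicIndependent_toZMod_eq (p : ℕ) [Fact p.Prime] {ι : Type}
    (hι : Cardinal.mk ι ≤ Cardinal.continuum) (a : ι → ℤ) :
    ∃ t : ι → ℤ_[p], AlgebraicIndependent ℤ t ∧ ∀ i, PadicInt.toZMod (t i) = a i := by
  obtain ⟨y, hy⟩ := Padic.exists_algebraicIndependent p hι
  have hz (i : ι) : ∃ (n : ℕ) (z : ℤ_[p]), (z : ℚ_[p]) = (p : ℚ_[p]) ^ n * y i := by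
    have h : Filter.Tendsto (fun n : ℕ => (p : ℚ_[p]) ^ n * y i) Filter.atTop (nhds (0 * y i)) :=
      (tendsto_pow_atTop_nhds_zero_of_norm_lt_one Padic.norm_p_lt_one).mul_const _
    rw [zero_mul] at h
    obtain ⟨n, hn⟩ := (h.norm.eventually_lt_const (u := 1) (by simp)).exists
    exact ⟨n, ⟨_, hn.le⟩, rfl⟩
  choose n z hz using hz
  have hp : (p : ℚ) ≠ 0 := by exact_mod_cast (Fact.out : p.Prime).ne_zero
  refine ⟨fun i => a i + p * z i, ?_, fun i => by simp⟩
  refine AlgebraicIndependent.of_comp (algebraMap ℤ_[p] ℚ_[p]).toIntAlgHom ?_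
  convert! (hy.affine (fun i => (a i : ℚ)) (fun i => (p : ℚ) ^ (n i + 1))
    fun i => pow_ne_zero _ hp).restrictScalars (R := ℤ) Int.cast_injective using 1
  ext i
  simp [hz, pow_succ', mul_assoc]

/-- Finitely many complex numbers become integral over `ℤ_[p]` under a suitable embedding of `ℂ`
into an algebraic closure of `ℚ_[p]`. -/
theorem exists_ringHom_algebraicClosure_padic (S : Finset ℂ) :
    ∃ (p : ℕ) (_ : Fact p.Prime) (σ : ℂ →+* AlgebraicClosure ℚ_[p]),
      ∀ s ∈ S, IsIntegral ℤ_[p] (σ s) := by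
  obtain ⟨ι, x, hx⟩ := exists_isTranscendenceBasis' ℤ ℂ
  have hι : Cardinal.mk ι ≤ Cardinal.continuum :=
    (Cardinal.mk_le_of_injective hx.1.injective).trans_eq Cardinal.mk_complex
  have := hx.isAlgebraic
  let : Algebra (MvPolynomial ι ℤ) ℂ := (MvPolynomial.aeval x).toRingHom.toAlgebra
  have hinj : Function.Injective (algebraMap (MvPolynomial ι ℤ) ℂ) := hx.1
  have : Algebra.IsAlgebraic (MvPolynomial ι ℤ) ℂ :=
    Algebra.IsAlgebraic.of_ringHom_of_comp_eq hx.1.aevalEquiv.toRingEquiv (RingHom.id ℂ)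
      hx.1.aevalEquiv.surjective Function.injective_id
      (RingHom.ext fun P => hx.1.algebraMap_aevalEquiv P)
  have : FaithfulSMul (MvPolynomial ι ℤ) ℂ := (faithfulSMul_iff_algebraMap_injective _ _).2 hinj
  obtain ⟨g, hg0, hg⟩ := Algebra.IsAlgebraic.exists_integral_multiples (R := MvPolynomial ι ℤ) S
  obtain ⟨a, ha⟩ : ∃ a : ι → ℤ, MvPolynomial.eval a g ≠ 0 := by
    by_contra! h
    exact hg0 (MvPolynomial.funext fun a => by simpa using h a)
  obtain ⟨p, hp, hpp⟩ := Nat.exists_infinite_primes ((MvPolynomial.eval a g).natAbs + 1)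
  have : Fact p.Prime := ⟨hpp⟩
  obtain ⟨t, ht, hta⟩ := PadicInt.exists_algebraicIndependent_toZMod_eq p hι a
  let : Algebra (MvPolynomial ι ℤ) ℤ_[p] := (MvPolynomial.aeval t).toRingHom.toAlgebra
  let : Algebra (MvPolynomial ι ℤ) (AlgebraicClosure ℚ_[p]) :=
    ((algebraMap ℤ_[p] (AlgebraicClosure ℚ_[p])).comp
      (algebraMap (MvPolynomial ι ℤ) ℤ_[p])).toAlgebra
  have : IsScalarTower (MvPolynomial ι ℤ) ℤ_[p] (AlgebraicClosure ℚ_[p]) :=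
    IsScalarTower.of_algebraMap_eq fun _ => rfl
  have hinj' : Function.Injective (algebraMap ℤ_[p] (AlgebraicClosure ℚ_[p])) := by
    rw [IsScalarTower.algebraMap_eq ℤ_[p] ℚ_[p] (AlgebraicClosure ℚ_[p])]
    exact (algebraMap ℚ_[p] (AlgebraicClosure ℚ_[p])).injective.comp
      (IsFractionRing.injective ℤ_[p] ℚ_[p])
  have : FaithfulSMul (MvPolynomial ι ℤ) (AlgebraicClosure ℚ_[p]) :=
    (faithfulSMul_iff_algebraMap_injective _ _).2 (hinj'.comp ht)
  let σ : ℂ →ₐ[MvPolynomial ι ℤ] AlgebraicClosure ℚ_[p] := IsAlgClosed.lift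
  refine ⟨p, ‹_›, σ, fun s hs => ?_⟩
  have h1 : IsIntegral ℤ_[p] (σ (g • s)) := ((hg s hs).map σ).tower_top
  have hu : IsUnit (algebraMap (MvPolynomial ι ℤ) ℤ_[p] g) := by
    have h : PadicInt.toZMod (algebraMap (MvPolynomial ι ℤ) ℤ_[p] g) =
        (MvPolynomial.eval a g : ZMod p) := by
      have : (PadicInt.toZMod.comp (algebraMap (MvPolynomial ι ℤ) ℤ_[p])) =
          (Int.castRingHom (ZMod p)).comp (MvPolynomial.eval a) := by
        ext i
        · simp
        · have : algebraMap (MvPolynomial ι ℤ) ℤ_[p] (MvPolynomial.X i) = t i :=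
            MvPolynomial.aeval_X t i
          simp [this, hta]
      exact DFunLike.congr_fun this g
    by_contra hnu
    rw [← mem_nonunits_iff, ← IsLocalRing.mem_maximalIdeal, ← PadicInt.ker_toZMod,
      RingHom.mem_ker, h, ZMod.intCast_zmod_eq_zero_iff_dvd, Int.natCast_dvd] at hnu
    exact absurd (Nat.le_of_dvd (Int.natAbs_pos.2 ha) hnu) (by omega)
  obtain ⟨u, hu⟩ := hu
  rw [Algebra.smul_def, map_mul, AlgHom.commutes,
    IsScalarTower.algebraMap_apply (MvPolynomial ι ℤ) ℤ_[p] (AlgebraicClosure ℚ_[p]), ← hu,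
    ← Algebra.smul_def] at h1
  simpa [smul_smul] using h1.smul (↑u⁻¹ : ℤ_[p])

theorem PadicInt.exists_dvd_p_pow {p : ℕ} [Fact p.Prime] {x : ℤ_[p]} (hx : x ≠ 0) :
    ∃ e : ℕ, x ∣ (p : ℤ_[p]) ^ e := by
  refine ⟨x.valuation, ?_⟩
  nth_rw 1 [PadicInt.unitCoeff_spec hx]
  simp

theorem PadicInt.factorial_dvd_p_pow (p : ℕ) [hp : Fact p.Prime] (j : ℕ) :
    (j.factorial : ℤ_[p]) ∣ (p : ℤ_[p]) ^ j := by
  have hx : (j.factorial : ℤ_[p]) ≠ 0 := by exact_mod_cast j.factorial_ne_zero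
  have hv : (j.factorial : ℤ_[p]).valuation ≤ j := by
    have h := sub_one_mul_padicValNat_factorial (p := p) j
    have h2 := hp.out.two_le
    have h3 : (j.factorial : ℤ_[p]).valuation = padicValNat p j.factorial := by
      rw [← Nat.cast_inj (R := ℤ), ← PadicInt.valuation_coe, PadicInt.coe_natCast,
        Padic.valuation_natCast]
    rw [h3]
    calc padicValNat p j.factorial ≤ (p - 1) * padicValNat p j.factorial :=
          Nat.le_mul_of_pos_left _ (by omega)
      _ ≤ j := by omega
  nth_rw 1 [PadicInt.unitCoeff_spec hx]
  simpa using pow_dvd_pow _ hv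

theorem natCast_prime_ne_zero_of_padicInt_algebra {p : ℕ} [Fact p.Prime] {A : Type*} [CommRing A]
    [Algebra ℤ_[p] A] [FaithfulSMul ℤ_[p] A] : (p : A) ≠ 0 := by
  rw [← map_natCast (algebraMap ℤ_[p] A), Ne, FaithfulSMul.algebraMap_eq_zero_iff]
  exact PadicInt.prime_p.ne_zero

/-- A polynomial that is `p`-adically small enough at the points `p k`, `k ∈ s`, is divisible by
`p ^ #s` at all points of `p ℕ`. -/
theorem exists_forall_pow_card_dvd_eval {p : ℕ} [Fact p.Prime] {A : Type*} [CommRing A]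
    [IsDomain A] [Algebra ℤ_[p] A] [FaithfulSMul ℤ_[p] A] (s : Finset ℕ) :
    ∃ T : ℕ, ∀ Q : A[X], (∀ k ∈ s, (p : A) ^ T ∣ Q.eval (p * k : A)) →
      ∀ x : ℕ, (p : A) ^ #s ∣ Q.eval (p * x : A) := by
  induction s using Finset.induction_on with
  | empty => exact ⟨0, by simp⟩
  | insert a s ha ih =>
    obtain ⟨T, hT⟩ := ih
    obtain ⟨e, he⟩ : ∃ e : ℕ, ∀ k ∈ s, (p * k - p * a : A) ∣ (p : A) ^ e := by
      have h0 : ∏ k ∈ s, (p * k - p * a : ℤ_[p]) ≠ 0 := by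
        refine Finset.prod_ne_zero_iff.2 fun k hk => ?_
        rw [← mul_sub]
        refine mul_ne_zero PadicInt.prime_p.ne_zero (sub_ne_zero.2 ?_)
        exact_mod_cast fun h : k = a => ha (h ▸ hk)
      obtain ⟨e, he⟩ := PadicInt.exists_dvd_p_pow h0
      refine ⟨e, fun k hk => ?_⟩
      simpa using map_dvd (algebraMap ℤ_[p] A) ((Finset.dvd_prod_of_mem _ hk).trans he)
    refine ⟨T + e + #s + 1, fun Q hQ x => ?_⟩
    set G := Q /ₘ (X - C (p * a : A))
    have hG (y : A) : Q.eval y = Q.eval (p * a : A) + (y - p * a) * G.eval y := by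
      conv_lhs => rw [← modByMonic_add_div Q (X - C (p * a : A)), modByMonic_X_sub_C_eq_C_eval]
      simp [G]
    have ha' := hQ a (mem_insert_self a s)
    have hsmall : ∀ k ∈ s, (p : A) ^ T ∣ G.eval (p * k : A) := by
      intro k hk
      have h1 : (p : A) ^ (T + e) ∣ (p * k - p * a) * G.eval (p * k : A) := by
        have h2 := dvd_sub (hQ k (mem_insert_of_mem hk)) ha'
        rw [hG (p * k), add_sub_cancel_left] at h2
        exact (pow_dvd_pow _ (by omega)).trans h2
      have h3 : (p : A) ^ e * (p : A) ^ T ∣ (p : A) ^ e * G.eval (p * k : A) := by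
        rw [← pow_add, add_comm]
        exact h1.trans (mul_dvd_mul_right (he k hk) _)
      exact (mul_dvd_mul_iff_left (pow_ne_zero _ natCast_prime_ne_zero_of_padicInt_algebra)).1 h3
    rw [hG, card_insert_of_notMem ha]
    refine dvd_add ((pow_dvd_pow _ (by omega)).trans ha') ?_
    rw [← mul_sub, pow_succ', mul_assoc]
    exact mul_dvd_mul_left _ ((hT G hsmall x).mul_left _)

/-- The Newton series `∑ j, (k choose j) p ^ (2 j) c j` is a uniform `p`-adic limit of polynomials
in `p k`. -/
theorem exists_polynomial_pow_dvd_newton_sub {p : ℕ} [Fact p.Prime] {A : Type*} [CommRing A]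
    [Algebra ℤ_[p] A] (c : ℕ → A) (T : ℕ) :
    ∃ Q : A[X], ∀ k : ℕ, (p : A) ^ T ∣
      ∑ j ∈ range (k + 1), (k.choose j : A) * (p : A) ^ (2 * j) * c j - Q.eval (p * k : A) := by
  have hw (j : ℕ) : ∃ w : A, (j.factorial : A) * w = (p : A) ^ j := by
    obtain ⟨w, hw⟩ := map_dvd (algebraMap ℤ_[p] A) (PadicInt.factorial_dvd_p_pow p j)
    exact ⟨w, by simpa using hw.symm⟩
  choose w hw using hw
  refine ⟨∑ j ∈ range T, C (c j * w j) * ∏ i ∈ range j, (X - C (p * i : A)), fun k => ?_⟩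
  have heval : (∑ j ∈ range T, C (c j * w j) * ∏ i ∈ range j, (X - C (p * i : A))).eval
      (p * k : A) = ∑ j ∈ range T, (k.choose j : A) * (p : A) ^ (2 * j) * c j := by
    rw [eval_finsetSum]
    refine sum_congr rfl fun j _ => ?_
    have h1 : ∏ i ∈ range j, ((k : A) - i) = j.factorial * k.choose j := by
      rw [← descPochhammer_eval_eq_prod_range, descPochhammer_eval_eq_descFactorial,
        Nat.descFactorial_eq_factorial_mul_choose, Nat.cast_mul]
    have h2 : ∏ i ∈ range j, ((p * k : A) - p * i) = p ^ j * (j.factorial * k.choose j) := by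
      rw [← h1]
      simp [← mul_sub, prod_mul_distrib]
    rw [eval_mul, eval_C, eval_prod]
    simp only [eval_sub, eval_X, eval_C, h2]
    rw [two_mul, pow_add]
    linear_combination (c j * k.choose j * (p : A) ^ j) * hw j
  have hext (m : ℕ) : ∑ j ∈ range (k + 1), (k.choose j : A) * (p : A) ^ (2 * j) * c j =
      ∑ j ∈ range (k + 1 + m), (k.choose j : A) * (p : A) ^ (2 * j) * c j := by
    rw [sum_range_add _ (k + 1) m, left_eq_add]
    exact sum_eq_zero fun i _ => by rw [Nat.choose_eq_zero_of_lt (by omega)]; simp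
  rw [heval, hext T, add_comm, sum_range_add, add_sub_cancel_left]
  refine dvd_sum fun i _ => ?_
  exact ((pow_dvd_pow _ (by omega)).mul_left _).mul_right _

/-- A Newton series with rapidly decreasing coefficients and infinitely many zeros vanishes. -/
theorem newton_eq_zero_of_infinite {p : ℕ} [Fact p.Prime] {A : Type*} [CommRing A]
    [IsDomain A] [Algebra ℤ_[p] A] [FaithfulSMul ℤ_[p] A] [Module.Finite ℤ_[p] A] (c : ℕ → A)
    (h : {k : ℕ | ∑ j ∈ range (k + 1), (k.choose j : A) * (p : A) ^ (2 * j) * c j = 0}.Infinite)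
    (k : ℕ) : ∑ j ∈ range (k + 1), (k.choose j : A) * (p : A) ^ (2 * j) * c j = 0 := by
  have hdvd (m : ℕ) : (p : A) ^ m ∣
      ∑ j ∈ range (k + 1), (k.choose j : A) * (p : A) ^ (2 * j) * c j := by
    obtain ⟨s, hs, hcard⟩ := h.exists_subset_card_eq m
    obtain ⟨T, hT⟩ := exists_forall_pow_card_dvd_eval (p := p) (A := A) s
    obtain ⟨Q, hQ⟩ := exists_polynomial_pow_dvd_newton_sub (p := p) c (T + m)
    have h1 := hT Q (fun l hl => ?_) k
    · rw [hcard] at h1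
      have := dvd_add ((pow_dvd_pow _ (by omega)).trans (hQ k)) h1
      simpa using this
    · have h2 := hQ l
      rw [show ∑ j ∈ range (l + 1), (l.choose j : A) * (p : A) ^ (2 * j) * c j = 0 from hs hl,
        zero_sub, dvd_neg] at h2
      exact (pow_dvd_pow _ (by omega)).trans h2
  have : IsNoetherianRing A := isNoetherian_of_tower ℤ_[p] inferInstance
  have hne : Ideal.span {(p : A)} ≠ ⊤ := by
    rw [Ne, Ideal.span_singleton_eq_top]
    intro hu
    rw [← map_natCast (algebraMap ℤ_[p] A)] at hu
    exact PadicInt.p_nonunit (isUnit_of_map_unit _ _ hu)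
  have hbot := Ideal.iInf_pow_eq_bot_of_isDomain _ hne
  rw [← Ideal.mem_bot, ← hbot, Ideal.mem_iInf]
  intro m
  rw [Ideal.span_singleton_pow, Ideal.mem_span_singleton]
  exact hdvd m

/-- A unit of a finite `ℤ_[p]`-algebra has a power congruent to `1` modulo `p ^ 2`. -/
theorem exists_pow_eq_one_add_sq_mul (p : ℕ) [Fact p.Prime] {B : Type*} [CommRing B]
    [Algebra ℤ_[p] B] [Module.Finite ℤ_[p] B] {x : B} (hx : IsUnit x) :
    ∃ N > 0, ∃ b : B, x ^ N = 1 + (p : B) ^ 2 * b := by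
  let I : Ideal ℤ_[p] := Ideal.span {(p : ℤ_[p]) ^ 2}
  have : Finite (ℤ_[p] ⧸ I) := by
    let e := Ideal.quotEquivOfEq (PadicInt.ker_toZModPow (p := p) 2)
    have : NeZero (p ^ 2) := ⟨pow_ne_zero _ (Fact.out : p.Prime).ne_zero⟩
    exact Finite.of_injective _ ((RingHom.kerLift_injective (PadicInt.toZModPow (p := p) 2)).comp
      e.symm.injective)
  have : Finite (B ⧸ (I • ⊤ : Submodule ℤ_[p] B)) :=
    Submodule.finite_quotient_smul I Module.Finite.fg_top
  obtain ⟨m, n, hmn, h⟩ := Finite.exists_ne_map_eq_of_infinite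
    fun n : ℕ => (I • ⊤ : Submodule ℤ_[p] B).mkQ (x ^ n)
  wlog hlt : m < n generalizing m n
  · exact this n m hmn.symm h.symm (by omega)
  simp only [Submodule.mkQ_apply] at h
  rw [eq_comm, Submodule.Quotient.eq, Submodule.ideal_span_singleton_smul,
    Submodule.mem_smul_pointwise_iff_exists] at h
  obtain ⟨b, -, hb⟩ := h
  obtain ⟨u, rfl⟩ := hx
  refine ⟨n - m, by omega, ↑(u⁻¹ ^ m) * b, ?_⟩
  rw [Algebra.smul_def] at hb
  simp only [map_pow, map_natCast] at hb
  have h1 : (u : B) ^ n = u ^ m * u ^ (n - m) := by rw [← pow_add]; congr 1; omega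
  have h2 : (↑(u⁻¹ ^ m) : B) * u ^ m = 1 := by
    rw [← Units.val_pow_eq_pow_val, ← Units.val_mul]; simp
  linear_combination (-(↑(u⁻¹ ^ m) : B)) * (hb + h1) + (1 - (u : B) ^ (n - m)) * h2

/-- The set of zeros of `n ↦ Λ (x ^ n)`, for `Λ` a linear form on `A[X] / (q)` and `x` the class of
`X`, is up to a finite set a union of residue classes. -/
theorem exists_period_linearForm_root_pow (p : ℕ) [Fact p.Prime] {A : Type*} [CommRing A]
    [IsDomain A] [Algebra ℤ_[p] A] [FaithfulSMul ℤ_[p] A] [Module.Finite ℤ_[p] A] {q : A[X]}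
    (hq : q.Monic) (hq0 : IsUnit (q.coeff 0)) (Λ : AdjoinRoot q →ₗ[A] A) :
    ∃ N > 0, ∀ r, {k : ℕ | Λ (AdjoinRoot.root q ^ (N * k + r)) = 0}.Infinite →
      ∀ k, Λ (AdjoinRoot.root q ^ (N * k + r)) = 0 := by
  have : Module.Finite A (AdjoinRoot q) := hq.finite_adjoinRoot
  have : Module.Finite ℤ_[p] (AdjoinRoot q) := Module.Finite.trans A _
  have hunit : IsUnit (AdjoinRoot.root q) := by
    have h : AdjoinRoot.mk q (divX q * X + C (q.coeff 0)) = 0 := by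
      rw [divX_mul_X_add, AdjoinRoot.mk_self]
    rw [map_add, map_mul, AdjoinRoot.mk_X, AdjoinRoot.mk_C] at h
    refine isUnit_of_mul_isUnit_right (x := AdjoinRoot.mk q (divX q)) ?_
    rw [eq_neg_of_add_eq_zero_left h]
    exact (hq0.map _).neg
  obtain ⟨N, hN, b, hb⟩ := exists_pow_eq_one_add_sq_mul p hunit
  refine ⟨N, hN, fun r => ?_⟩
  have key (k : ℕ) : Λ (AdjoinRoot.root q ^ (N * k + r)) =
      ∑ j ∈ range (k + 1), (k.choose j : A) * (p : A) ^ (2 * j) *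
        Λ (AdjoinRoot.root q ^ r * b ^ j) := by
    rw [pow_add, pow_mul, hb, add_comm 1, add_pow, sum_mul, map_sum]
    refine sum_congr rfl fun j _ => ?_
    rw [← smul_eq_mul _ (Λ _), ← map_smul, Algebra.smul_def]
    congr 1
    simp only [map_mul, map_pow, map_natCast]
    ring
  simp only [key]
  exact newton_eq_zero_of_infinite _

/-- A sequence satisfying a linear recurrence is determined by its initial values. -/
theorem eq_of_sum_coeff_mul_eq_zero {R : Type*} [CommRing R] {q : R[X]} (hq : q.Monic)
    {u v : ℕ → R} (hu : ∀ m, ∑ i ∈ range (q.natDegree + 1), q.coeff i * u (m + i) = 0)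
    (hv : ∀ m, ∑ i ∈ range (q.natDegree + 1), q.coeff i * v (m + i) = 0)
    (h : ∀ i < q.natDegree, u i = v i) (n : ℕ) : u n = v n := by
  induction n using Nat.strong_induction_on with
  | _ n ih =>
    rcases lt_or_ge n q.natDegree with hn | hn
    · exact h n hn
    · have h1 := hu (n - q.natDegree)
      have h2 := hv (n - q.natDegree)
      rw [sum_range_succ, hq.coeff_natDegree, one_mul, Nat.sub_add_cancel hn] at h1 h2
      rw [eq_neg_of_add_eq_zero_right h1, eq_neg_of_add_eq_zero_right h2]
      congr 1
      refine sum_congr rfl fun i hi => ?_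
      rw [ih _ (by have := mem_range.1 hi; omega)]

/-- **Skolem–Mahler–Lech** for complex linear recurrences with nonzero constant coefficient: there
is a period `N` such that on each residue class modulo `N` the sequence either vanishes or has
finitely many zeros. -/
theorem exists_period_of_sum_coeff_mul_eq_zero {q : ℂ[X]} (hq : q.Monic) (hq0 : q.coeff 0 ≠ 0)
    {u : ℕ → ℂ} (hu : ∀ m, ∑ i ∈ range (q.natDegree + 1), q.coeff i * u (m + i) = 0) :
    ∃ N > 0, ∀ r, {k : ℕ | u (N * k + r) = 0}.Infinite → ∀ k, u (N * k + r) = 0 := by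
  classical
  let S : Finset ℂ := insert (q.coeff 0)⁻¹
    ((range (q.natDegree + 1)).image q.coeff ∪ (range q.natDegree).image u)
  obtain ⟨p, _, σ, hσ⟩ := exists_ringHom_algebraicClosure_padic S
  let A := Algebra.adjoin ℤ_[p] (σ '' S)
  have hmem {s : ℂ} (hs : s ∈ S) : σ s ∈ A := Algebra.subset_adjoin ⟨s, hs, rfl⟩
  have : Module.Finite ℤ_[p] A :=
    Algebra.finite_adjoin_of_finite_of_isIntegral (S.finite_toSet.image σ)
      (by rintro _ ⟨s, hs, rfl⟩; exact hσ s hs)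
  have : FaithfulSMul ℤ_[p] A := by
    rw [faithfulSMul_iff_algebraMap_injective]
    refine Function.Injective.of_comp (f := algebraMap A (AlgebraicClosure ℚ_[p])) ?_
    rw [← RingHom.coe_comp, ← IsScalarTower.algebraMap_eq,
      IsScalarTower.algebraMap_eq ℤ_[p] ℚ_[p] (AlgebraicClosure ℚ_[p])]
    exact (algebraMap ℚ_[p] (AlgebraicClosure ℚ_[p])).injective.comp
      (IsFractionRing.injective ℤ_[p] ℚ_[p])
  have hcoeff (i : ℕ) : σ (q.coeff i) ∈ A := by
    rcases lt_or_ge q.natDegree i with hi | hi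
    · rw [coeff_eq_zero_of_natDegree_lt hi, map_zero]
      exact zero_mem A
    · exact hmem (mem_insert_of_mem (mem_union_left _ (mem_image_of_mem _ (by simp; omega))))
  obtain ⟨Q, hQ, hQdeg, hQm⟩ := lifts_and_natDegree_eq_and_monic
    (f := algebraMap A (AlgebraicClosure ℚ_[p])) (p := q.map σ)
    ((lifts_iff_coeff_lifts _).2 fun i => ⟨⟨_, hcoeff i⟩, (coeff_map σ i).symm⟩) (hq.map σ)
  rw [natDegree_map] at hQdeg
  have hQcoeff (i : ℕ) : (Q.coeff i : AlgebraicClosure ℚ_[p]) = σ (q.coeff i) := by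
    rw [← coeff_map, ← hQ, coeff_map]
    rfl
  have hQ0 : IsUnit (Q.coeff 0) := by
    refine IsUnit.of_mul_eq_one ⟨σ (q.coeff 0)⁻¹, hmem (mem_insert_self _ _)⟩ (Subtype.ext ?_)
    simp [hQcoeff, hq0]
  have hinit (i : Fin Q.natDegree) : σ (u i) ∈ A :=
    hmem (mem_insert_of_mem (mem_union_right _ (mem_image_of_mem _ (by simp [← hQdeg]))))
  let Λ : AdjoinRoot Q →ₗ[A] A :=
    (AdjoinRoot.powerBasisAux' hQm).constr A fun i => ⟨σ (u i), hinit i⟩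
  have hΛ (n : ℕ) : σ (u n) = Λ (AdjoinRoot.root Q ^ n) := by
    refine eq_of_sum_coeff_mul_eq_zero (hq.map σ) (u := fun n => σ (u n))
      (v := fun n => (Λ (AdjoinRoot.root Q ^ n) : AlgebraicClosure ℚ_[p]))
      (fun m => ?_) (fun m => ?_) (fun i hi => ?_) n
    · simpa using congrArg σ (hu m)
    · have h : ∑ i ∈ range (q.natDegree + 1), Q.coeff i • AdjoinRoot.root Q ^ (m + i) = 0 := by
        have h1 := AdjoinRoot.mk_self (f := Q)
        rw [← AdjoinRoot.aeval_eq, aeval_eq_sum_range, hQdeg] at h1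
        simpa [mul_sum, pow_add] using congrArg (AdjoinRoot.root Q ^ m * ·) h1
      have h2 := congrArg (fun z => (Λ z : AlgebraicClosure ℚ_[p])) h
      simpa [hQcoeff] using h2
    · rw [natDegree_map, ← hQdeg] at hi
      have h1 : AdjoinRoot.powerBasisAux' hQm ⟨i, hi⟩ = AdjoinRoot.root Q ^ i :=
        (AdjoinRoot.powerBasis' hQm).basis_eq_pow ⟨i, hi⟩
      rw [← h1, Module.Basis.constr_basis]
  obtain ⟨N, hN, h⟩ := exists_period_linearForm_root_pow p hQm hQ0 Λ
  have hiff (n : ℕ) : Λ (AdjoinRoot.root Q ^ n) = 0 ↔ u n = 0 := by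
    rw [← map_eq_zero σ, hΛ, ZeroMemClass.coe_eq_zero]
  simp only [hiff] at h
  exact ⟨N, hN, h⟩

/-- A set of naturals whose intersection with each residue class modulo `N`, beyond `e`, is finite
or everything is semilinear. -/
theorem semilinear_of_forall_residue {Z : Set ℕ} {N : ℕ} (hN : 0 < N) (e : ℕ)
    (h : ∀ r, {k : ℕ | N * k + r + e ∈ Z}.Infinite → ∀ k, N * k + r + e ∈ Z) : Semilinear Z := by
  classical
  let s : Finset (ℕ × ℕ) :=
    ((range N).filter fun r => ∀ k, N * k + r + e ∈ Z).image fun r => (N, r + e)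
  have hsub : (⋃ q ∈ s, {n : ℕ | ∃ k : ℕ, n = q.1 * k + q.2}) ⊆ Z := by
    intro n hn
    simp only [Set.mem_iUnion, s, mem_image, mem_filter] at hn
    obtain ⟨_, ⟨r, ⟨-, hr⟩, rfl⟩, k, rfl⟩ := hn
    simpa [add_assoc] using hr k
  have hfin : (Z \ ⋃ q ∈ s, {n : ℕ | ∃ k : ℕ, n = q.1 * k + q.2}).Finite := by
    have hbad : ((Set.Iio e) ∪ ⋃ r ∈ (range N).filter fun r => ¬ ∀ k, N * k + r + e ∈ Z,
        (fun k => N * k + r + e) '' {k : ℕ | N * k + r + e ∈ Z}).Finite := by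
      refine (Set.finite_Iio e).union ((Finset.finite_toSet _).biUnion fun r hr => ?_)
      refine Set.Finite.image _ (Set.not_infinite.1 fun hinf => ?_)
      exact (mem_filter.1 hr).2 (h r hinf)
    refine hbad.subset fun n ⟨hnZ, hn⟩ => ?_
    rcases lt_or_ge n e with hne | hne
    · exact Or.inl hne
    · refine Or.inr ?_
      have hr : (n - e) % N < N := Nat.mod_lt _ hN
      have hk : N * ((n - e) / N) + (n - e) % N + e = n := by
        rw [Nat.div_add_mod, Nat.sub_add_cancel hne]
      simp only [Set.mem_iUnion]
      refine ⟨(n - e) % N, mem_filter.2 ⟨mem_range.2 hr, fun hall => hn ?_⟩, (n - e) / N, ?_, hk⟩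
      · simp only [Set.mem_iUnion]
        exact ⟨(N, (n - e) % N + e), mem_image.2 ⟨_, mem_filter.2 ⟨mem_range.2 hr, hall⟩, rfl⟩,
          (n - e) / N, by simpa [add_assoc] using hk.symm⟩
      · simpa [hk] using hnZ
  refine ⟨hfin.toFinset, s, fun q hq => ?_, ?_⟩
  · obtain ⟨r, -, rfl⟩ := mem_image.1 hq
    exact hN
  · rw [Set.Finite.coe_toFinset, Set.sdiff_union_of_subset hsub]

/-- For a linear map `M` on a finite-dimensional complex inner product space
and vectors `φ, ψ`, the set `{n | ⟨φ, M^n ψ⟩ = 0}` is semilinear. -/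
theorem stmt_2 {V : Type*} [NormedAddCommGroup V] [InnerProductSpace ℂ V]
    [FiniteDimensional ℂ V]
    (M : V →ₗ[ℂ] V) (φ ψ : V) :
    Semilinear {n : ℕ | ⟪φ, (M ^ n) ψ⟫_ℂ = 0} := by
  have hmonic : (minpoly ℂ M).Monic := minpoly.monic (Algebra.IsIntegral.isIntegral M)
  obtain ⟨q, hq, hndvd⟩ := exists_eq_pow_rootMultiplicity_mul_and_not_dvd (minpoly ℂ M)
    hmonic.ne_zero 0
  rw [C_0, sub_zero] at hq hndvd
  set e := rootMultiplicity 0 (minpoly ℂ M)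
  have hqm : q.Monic := (monic_X_pow e).of_mul_monic_left (hq ▸ hmonic)
  have hq0 : q.coeff 0 ≠ 0 := fun h => hndvd (X_dvd_iff.2 h)
  have hrec (m : ℕ) :
      ∑ i ∈ range (q.natDegree + 1), q.coeff i * ⟪φ, (M ^ (m + i + e)) ψ⟫_ℂ = 0 := by
    have h1 : aeval M q * M ^ (m + e) = 0 := by
      have h2 : aeval M (X ^ e * q) = 0 := hq ▸ minpoly.aeval ℂ M
      have h3 : aeval M (q * X ^ (m + e)) = 0 := by
        rw [pow_add, show q * (X ^ m * X ^ e) = X ^ m * (X ^ e * q) by ring, map_mul, h2, mul_zero]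
      simpa using h3
    have h4 := congrArg (fun T : V →ₗ[ℂ] V => ⟪φ, T ψ⟫_ℂ) h1
    rw [aeval_eq_sum_range, sum_mul] at h4
    simp only [smul_mul_assoc, ← pow_add, LinearMap.sum_apply, LinearMap.smul_apply, inner_sum,
      inner_smul_right, LinearMap.zero_apply, inner_zero_right] at h4
    rw [← h4]
    refine sum_congr rfl fun i _ => ?_
    rw [show m + i + e = i + (m + e) by ring]
  obtain ⟨N, hN, h⟩ := exists_period_of_sum_coeff_mul_eq_zero
    (u := fun n => ⟪φ, (M ^ (n + e)) ψ⟫_ℂ) hqm hq0 hrec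
  exact semilinear_of_forall_residue hN e h
end

section
/- Let H be a finite-dimensional complex inner product space, U a unitary operator on H, P an orthogonal projection on H, and ψ₀ ∈ H. Then the set Z = {n ∈ ℕ | P U^n ψ₀ = 0} is semilinear, i.e., it is the union of a finite set and finitely many arithmetic progressions of the form {a k + b : k ∈ ℕ} with a ≥ 1. -/
open scoped InnerProductSpace

open Polynomial in
/-- A polynomial whose reduction modulo `I` has degree less than its number of roots takes values
in `I`. -/
theorem Polynomial.eval_mem_of_card_roots {S : Type*} [CommRing S] [IsDomain S] (I : Ideal S)
    (f : S[X]) (t : Finset S) (ht : ∀ a ∈ t, f.eval a = 0)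
    (hf : (f.map (Ideal.Quotient.mk I)).degree < t.card) (x : S) : f.eval x ∈ I := by
  rcases eq_or_ne f 0 with rfl | hf0
  · simp
  have hdvd : (∏ a ∈ t, (X - C a)) ∣ f := by
    refine (Multiset.prod_X_sub_C_dvd_iff_le_roots hf0 t.val).2 ?_
    rw [Multiset.le_iff_subset t.nodup]
    intro a ha
    exact (mem_roots hf0).2 (ht a ha)
  have hmonic : (∏ a ∈ t, (X - C a)).Monic := monic_prod_X_sub_C _ _
  have hzero : f.map (Ideal.Quotient.mk I) = 0 := by
    rcases subsingleton_or_nontrivial (S ⧸ I) with h | h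
    · exact Subsingleton.elim _ _
    by_contra hne
    refine (hmonic.map (Ideal.Quotient.mk I)).not_dvd_of_degree_lt hne ?_
      (Polynomial.map_dvd (Ideal.Quotient.mk I) hdvd)
    rw [hmonic.degree_map, degree_prod]
    simpa using hf
  rw [← Ideal.Quotient.eq_zero_iff_mem, ← eval_map_apply, hzero, eval_zero]

theorem PadicInt.factorial_dvd_pow {p : ℕ} [Fact p.Prime] (hp : 2 < p) (k : ℕ) :
    ((k.factorial : ℕ) : ℤ_[p]) ∣ (p : ℤ_[p]) ^ (k / 2) := by
  obtain ⟨e, u, hu, hk⟩ := Nat.exists_eq_pow_mul_and_not_dvd k.factorial_ne_zero p (by lia)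
  have he : e ≤ k / 2 := by
    have h1 := sub_one_mul_padicValNat_factorial (p := p) k
    have h2 : e ≤ padicValNat p k.factorial :=
      (padicValNat_dvd_iff_le k.factorial_ne_zero).1 (hk ▸ dvd_mul_right _ _)
    have h3 : 2 * padicValNat p k.factorial ≤ (p - 1) * padicValNat p k.factorial :=
      Nat.mul_le_mul_right _ (by lia)
    lia
  have hunit : IsUnit (u : ℤ_[p]) := by
    rw [PadicInt.isUnit_iff, PadicInt.norm_natCast_eq_one_iff]
    exact ((Fact.out : p.Prime).coprime_iff_not_dvd).2 hu
  rw [hk, Nat.cast_mul, Nat.cast_pow, hunit.mul_right_dvd]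
  exact pow_dvd_pow _ he

open Polynomial in
/-- A sequence `∑ₖ (n choose k) pᵏ dₖ` in a `p`-adically separated domain over `ℤ_[p]`, `p` odd,
that vanishes infinitely often vanishes identically. -/
theorem eq_zero_of_infinite_zeros_of_sum_choose {p : ℕ} [Fact p.Prime] (hp : 2 < p) {S : Type*}
    [CommRing S] [IsDomain S] [CharZero S] [Algebra ℤ_[p] S]
    (hsep : ∀ x : S, (∀ e : ℕ, (p : S) ^ e ∣ x) → x = 0) (d b : ℕ → S)
    (hb : ∀ n, b n = ∑ k ∈ Finset.range (n + 1), (n.choose k : S) * (p : S) ^ k * d k)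
    (hinf : {n | b n = 0}.Infinite) (n : ℕ) : b n = 0 := by
  choose r hr using fun k => PadicInt.factorial_dvd_pow (p := p) hp k
  let q : ℕ → S := fun k => (p : S) ^ (k - k / 2) * algebraMap ℤ_[p] S (r k)
  have hq (k : ℕ) : (k.factorial : S) * q k = (p : S) ^ k := by
    have h := congrArg (algebraMap ℤ_[p] S) (hr k)
    simp only [map_pow, map_mul, map_natCast] at h
    calc (k.factorial : S) * q k
        = (p : S) ^ (k - k / 2) * ((k.factorial : S) * algebraMap ℤ_[p] S (r k)) := by
          simp only [q]; ring
      _ = (p : S) ^ k := by rw [← h, ← pow_add]; congr 1; lia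
  refine hsep _ fun e => ?_
  obtain ⟨t, htz, htc⟩ := hinf.exists_subset_card_eq (2 * e)
  let T := n + t.sup id
  let f : S[X] := ∑ k ∈ Finset.range (T + 1), C (q k * d k) * descPochhammer S k
  have hf (x : ℕ) (hx : x ≤ T) : f.eval (x : S) = b x := by
    rw [hb, eval_finsetSum]
    symm
    refine (Finset.sum_subset (Finset.range_mono (by lia)) fun k _ hk => ?_).trans
      (Finset.sum_congr rfl fun k _ => ?_)
    · rw [Nat.choose_eq_zero_of_lt (by simpa using hk)]; simp
    · rw [eval_mul, eval_C, descPochhammer_eval_eq_descFactorial,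
        Nat.descFactorial_eq_factorial_mul_choose, ← hq k]
      push_cast; ring
  have key := Polynomial.eval_mem_of_card_roots (Ideal.span {(p : S) ^ e}) f
    (t.map Nat.castEmbedding) ?_ ?_ (n : S)
  · rwa [hf n (by lia), Ideal.mem_span_singleton] at key
  · intro a ha
    obtain ⟨m, hm, rfl⟩ := Finset.mem_map.1 ha
    have : m ≤ t.sup id := Finset.le_sup (f := id) hm
    exact (hf m (by lia)).trans (htz hm)
  · rw [Finset.card_map, htc, Polynomial.map_sum, degree_lt_iff_coeff_zero]
    intro j hj
    rw [finsetSum_coeff]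
    refine Finset.sum_eq_zero fun k _ => ?_
    rw [Polynomial.map_mul, map_C, coeff_C_mul, coeff_map]
    rcases lt_or_ge k j with hkj | hkj
    · rw [coeff_eq_zero_of_natDegree_lt (by rwa [descPochhammer_natDegree]), map_zero, mul_zero]
    · have : Ideal.Quotient.mk (Ideal.span {(p : S) ^ e}) (q k * d k) = 0 := by
        rw [Ideal.Quotient.eq_zero_iff_mem, Ideal.mem_span_singleton]
        exact ((pow_dvd_pow _ (by lia)).mul_right _).mul_right _
      rw [this, zero_mul]

theorem PadicInt.eq_zero_of_forall_pow_dvd {p : ℕ} [Fact p.Prime] {S : Type*} [CommRing S]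
    [IsDomain S] [Algebra ℤ_[p] S] [Module.Finite ℤ_[p] S] [FaithfulSMul ℤ_[p] S]
    (x : S) (hx : ∀ e : ℕ, (p : S) ^ e ∣ x) : x = 0 := by
  have : IsNoetherianRing S := IsNoetherianRing.of_finite ℤ_[p] S
  have hne : Ideal.span {(p : S)} ≠ ⊤ := by
    rw [Ne, Ideal.span_singleton_eq_top]
    intro h
    rw [← map_natCast (algebraMap ℤ_[p] S)] at h
    exact PadicInt.prime_p.not_isUnit (IsUnit.of_map _ _ h)
  have h := Ideal.iInf_pow_eq_bot_of_isDomain _ hne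
  rw [← Ideal.mem_bot, ← h, Ideal.mem_iInf]
  intro e
  rw [Ideal.span_singleton_pow, Ideal.mem_span_singleton]
  exact hx e

theorem PadicInt.finite_quotient_span_p {p : ℕ} [Fact p.Prime] (S : Type*) [CommRing S]
    [Algebra ℤ_[p] S] [Module.Finite ℤ_[p] S] : Finite (S ⧸ Ideal.span {(p : S)}) := by
  have : Finite (ℤ_[p] ⧸ Ideal.span {(p : ℤ_[p])}) := by
    rw [← PadicInt.maximalIdeal_eq_span_p]
    exact Finite.of_equiv _ (PadicInt.residueField (p := p)).symm.toEquiv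
  have h := Module.finite_of_finite (ℤ_[p] ⧸ Ideal.span {(p : ℤ_[p])})
    (M := S ⧸ (Ideal.span {(p : ℤ_[p])}).map (algebraMap ℤ_[p] S))
  rwa [Ideal.map_span, Set.image_singleton, map_natCast] at h

open Matrix in
/-- Along a suitable common difference, a linear recurrence over a finite extension of `ℤ_[p]`,
`p` odd, vanishes identically as soon as it vanishes infinitely often. -/
theorem exists_period_of_padic {p : ℕ} [Fact p.Prime] (hp : 2 < p) {S : Type*}
    [CommRing S] [IsDomain S] [Algebra ℤ_[p] S] [Module.Finite ℤ_[p] S] [FaithfulSMul ℤ_[p] S]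
    {ι : Type*} [Fintype ι] [DecidableEq ι] (M M' Q : Matrix ι ι S) (hM : M * M' = 1)
    (v : ι → S) :
    ∃ N : ℕ, 0 < N ∧ ∀ r : ℕ, {n : ℕ | Q *ᵥ (M ^ (r + N * n) *ᵥ v) = 0}.Infinite →
      ∀ n, Q *ᵥ (M ^ (r + N * n) *ᵥ v) = 0 := by
  have : CharZero S := charZero_of_injective_algebraMap (FaithfulSMul.algebraMap_injective ℤ_[p] S)
  have hfin := PadicInt.finite_quotient_span_p (p := p) S
  let π := Ideal.Quotient.mk (Ideal.span {(p : S)})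
  obtain ⟨N, hN, hMN⟩ : ∃ N : ℕ, 0 < N ∧ (M ^ N).map π = 1 := by
    have h1 : π.mapMatrix M * π.mapMatrix M' = 1 := by rw [← map_mul, hM, map_one]
    let m : (Matrix ι ι (S ⧸ Ideal.span {(p : S)}))ˣ :=
      ⟨π.mapMatrix M, π.mapMatrix M', h1, mul_eq_one_comm.1 h1⟩
    refine ⟨Nat.card (Matrix ι ι (S ⧸ Ideal.span {(p : S)}))ˣ, Nat.card_pos, ?_⟩
    have h2 := congrArg Units.val (pow_card_eq_one' (x := m))
    rw [Units.val_pow_eq_pow_val, Units.val_one] at h2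
    change π.mapMatrix (M ^ _) = 1
    rw [map_pow]
    exact h2
  obtain ⟨B, hB⟩ : ∃ B : Matrix ι ι S, M ^ N = (p : S) • B + 1 := by
    have h (i j : ι) : (p : S) ∣ (M ^ N - 1) i j := by
      rw [← Ideal.mem_span_singleton, ← Ideal.Quotient.eq_zero_iff_mem]
      have := congrFun (congrFun hMN i) j
      rw [Matrix.map_apply] at this
      rw [Matrix.sub_apply, map_sub]
      change π _ - π _ = 0
      rw [this, Matrix.one_apply, Matrix.one_apply]
      split_ifs <;> simp
    choose B hB using h
    refine ⟨Matrix.of B, ?_⟩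
    ext i j
    have := hB i j
    rw [Matrix.sub_apply] at this
    simp [← this]
  refine ⟨N, hN, fun r hinf n => funext fun i => ?_⟩
  refine eq_zero_of_infinite_zeros_of_sum_choose hp PadicInt.eq_zero_of_forall_pow_dvd
    (fun k => (Q *ᵥ (M ^ r *ᵥ (B ^ k *ᵥ v))) i) (fun n => (Q *ᵥ (M ^ (r + N * n) *ᵥ v)) i)
    (fun n => ?_) (hinf.mono fun m (hm : Q *ᵥ (M ^ (r + N * m) *ᵥ v) = 0) => congrFun hm i) n
  have hpow : M ^ (r + N * n) *ᵥ v = M ^ r *ᵥ (∑ k ∈ Finset.range (n + 1),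
      ((n.choose k : S) * (p : S) ^ k) • B ^ k) *ᵥ v := by
    rw [pow_add, pow_mul, hB, (Commute.one_right _).add_pow, ← Matrix.mulVec_mulVec]
    congr 2
    refine Finset.sum_congr rfl fun k _ => ?_
    rw [one_pow, mul_one, smul_pow, mul_smul, ← nsmul_eq_mul', ← Nat.cast_smul_eq_nsmul S]
  simp only [hpow, Matrix.sum_mulVec, Matrix.mulVec_sum, Finset.sum_apply, Matrix.smul_mulVec,
    Matrix.mulVec_smul, Pi.smul_apply, smul_eq_mul]

theorem PadicInt.exists_algebraicIndependent (p : ℕ) [Fact p.Prime] (s : ℕ) :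
    ∃ τ : Fin s → ℤ_[p], AlgebraicIndependent ℤ τ := by
  obtain ⟨ι, x, hx⟩ := exists_isTranscendenceBasis' ℤ ℤ_[p]
  have hι : Infinite ι := by
    by_contra hfin
    rw [not_infinite_iff_finite] at hfin
    have halg := hx.isAlgebraic
    have hpoly : Countable (MvPolynomial ι ℤ) := by
      rw [← Cardinal.mk_le_aleph0_iff]
      exact MvPolynomial.cardinalMk_le_max.trans (by simp)
    have hcount : Countable (Algebra.adjoin ℤ (Set.range x)) :=
      hx.1.aevalEquiv.symm.toEquiv.injective.countable
    have hle := Algebra.IsAlgebraic.cardinalMk_le_max (Algebra.adjoin ℤ (Set.range x)) ℤ_[p]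
    rw [max_eq_right (Cardinal.mk_le_aleph0_iff.2 hcount), Cardinal.mk_le_aleph0_iff] at hle
    have hsurj : Function.Surjective fun a : ℤ_[p] × ℤ_[p] => (a.1 / a.2 : ℚ_[p]) := fun z => by
      obtain ⟨a, b, -, h⟩ := IsFractionRing.div_surjective (A := ℤ_[p]) z
      exact ⟨(a, b), h⟩
    have hQ := hsurj.countable
    exact Cardinal.aleph0_lt_continuum.not_ge
      ((continuum_le_cardinal_of_nontriviallyNormedField ℚ_[p]).trans
        (Cardinal.mk_le_aleph0_iff.2 hQ))
  exact ⟨_, hx.1.comp _ ((Fin.valEmbedding.trans (Infinite.natEmbedding ι)).injective)⟩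

theorem Padic.norm_aeval_le_one {p : ℕ} [Fact p.Prime] {s : ℕ} (τ : Fin s → ℤ_[p])
    (q : MvPolynomial (Fin s) ℚ) (hq : ∀ m ∈ q.support, ¬ p ∣ (q.coeff m).den) :
    ‖MvPolynomial.aeval (fun i => (τ i : ℚ_[p])) q‖ ≤ 1 := by
  rw [MvPolynomial.aeval_def, MvPolynomial.eval₂_eq]
  refine IsUltrametricDist.norm_sum_le_of_forall_le_of_nonneg zero_le_one fun m hm => ?_
  rw [norm_mul, norm_prod]
  refine mul_le_one₀ ?_ (Finset.prod_nonneg fun _ _ => norm_nonneg _)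
    (Finset.prod_le_one (fun _ _ => norm_nonneg _) fun i _ => ?_)
  · simpa using Padic.norm_rat_le_one (hq m hm)
  · rw [norm_pow]
    exact pow_le_one₀ (norm_nonneg _) (τ i).2

open Polynomial in
/-- A finitely generated domain over `ℚ` embeds into the algebraic closure of some `ℚ_[p]` in such
a way that any prescribed finite set of elements becomes integral over `ℤ_[p]`. -/
theorem exists_embedding_integral {A : Type*} [CommRing A] [IsDomain A] [Algebra ℚ A]
    [Algebra.FiniteType ℚ A] (F : Finset A) :
    ∃ (p : ℕ) (_ : Fact p.Prime), 2 < p ∧ ∃ σ : A →+* AlgebraicClosure ℚ_[p],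
      Function.Injective σ ∧ ∀ x ∈ F, IsIntegral ℤ_[p] (σ x) := by
  obtain ⟨s, g, hginj, hgint⟩ := exists_integral_inj_algHom_of_fg ℚ A
  choose f hfm hf using hgint
  obtain ⟨p, hp, hprime, hden⟩ : ∃ p, 2 < p ∧ p.Prime ∧ ∀ x ∈ F, ∀ j ∈ (f x).support,
      ∀ m ∈ ((f x).coeff j).support, ¬ p ∣ (((f x).coeff j).coeff m).den := by
    have hev : ∀ᶠ p : ℕ in Filter.atTop, 2 < p ∧ ∀ x ∈ F, ∀ j ∈ (f x).support,
        ∀ m ∈ ((f x).coeff j).support, (((f x).coeff j).coeff m).den < p := by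
      simp only [Filter.eventually_and, Filter.eventually_all_finset]
      exact ⟨Filter.eventually_gt_atTop _, fun _ _ _ _ _ _ => Filter.eventually_gt_atTop _⟩
    obtain ⟨p, hprime, hp, hlt⟩ :=
      ((Nat.frequently_atTop_iff_infinite.2 Nat.infinite_setOfPred_prime).and_eventually hev).exists
    exact ⟨p, hp, hprime, fun x hx j hj m hm hdvd =>
      (Nat.le_of_dvd (Rat.den_pos _) hdvd).not_gt (hlt x hx j hj m hm)⟩
  have : Fact p.Prime := ⟨hprime⟩
  obtain ⟨τ, hτ⟩ := PadicInt.exists_algebraicIndependent p s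
  let y : Fin s → ℚ_[p] := fun i => τ i
  have hy : AlgebraicIndependent ℚ y := by
    have h : AlgebraicIndependent ℤ y := hτ.map' (f := (Algebra.ofId ℤ_[p] ℚ_[p]).restrictScalars ℤ)
      (FaithfulSMul.algebraMap_injective ℤ_[p] ℚ_[p])
    have : Algebra.IsAlgebraic ℤ ℚ :=
      (IsFractionRing.comap_isAlgebraic_iff (K := ℚ)).2 inferInstance
    exact h.extendScalars ℚ
  let φ : MvPolynomial (Fin s) ℚ →+* AlgebraicClosure ℚ_[p] :=
    (algebraMap ℚ_[p] (AlgebraicClosure ℚ_[p])).comp (MvPolynomial.aeval y).toRingHom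
  have hφ : Function.Injective φ :=
    (FaithfulSMul.algebraMap_injective ℚ_[p] (AlgebraicClosure ℚ_[p])).comp hy
  let : Algebra (MvPolynomial (Fin s) ℚ) A := g.toRingHom.toAlgebra
  let : Algebra (MvPolynomial (Fin s) ℚ) (AlgebraicClosure ℚ_[p]) := φ.toAlgebra
  have : FaithfulSMul (MvPolynomial (Fin s) ℚ) A :=
    (faithfulSMul_iff_algebraMap_injective _ _).2 hginj
  have : FaithfulSMul (MvPolynomial (Fin s) ℚ) (AlgebraicClosure ℚ_[p]) :=
    (faithfulSMul_iff_algebraMap_injective _ _).2 hφ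
  have : Algebra.IsIntegral (MvPolynomial (Fin s) ℚ) A := ⟨fun x => ⟨f x, hfm x, hf x⟩⟩
  let σ : A →ₐ[MvPolynomial (Fin s) ℚ] AlgebraicClosure ℚ_[p] := IsAlgClosed.lift
  refine ⟨p, inferInstance, hp, σ.toRingHom, ?_, fun x hx => ?_⟩
  · rw [RingHom.injective_iff_ker_eq_bot]
    refine Ideal.eq_bot_of_comap_eq_bot (R := MvPolynomial (Fin s) ℚ) ?_
    rw [RingHom.comap_ker, ← RingHom.injective_iff_ker_eq_bot]
    convert hφ
    exact RingHom.ext σ.commutes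
  · have hlift : (f x).map φ ∈ lifts (algebraMap ℤ_[p] (AlgebraicClosure ℚ_[p])) := by
      rw [lifts_iff_coeff_lifts]
      intro j
      rw [coeff_map]
      by_cases hj : j ∈ (f x).support
      · exact ⟨⟨_, Padic.norm_aeval_le_one τ _ (hden x hx j hj)⟩, rfl⟩
      · rw [notMem_support_iff.1 hj, map_zero]
        exact ⟨0, map_zero _⟩
    obtain ⟨h, hmap, -, hmonic⟩ := lifts_and_degree_eq_and_monic hlift ((hfm x).map φ)
    refine ⟨h, hmonic, ?_⟩
    rw [eval₂_eq_eval_map, hmap, ← eval₂_eq_eval_map]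
    have := congrArg σ (hf x)
    rw [map_zero] at this
    rw [← this]
    change _ = σ.toRingHom _
    rw [hom_eval₂]
    congr 1
    exact (RingHom.ext σ.commutes).symm

/-- A finitely generated subring of a field of characteristic zero embeds into a domain finite over
`ℤ_[p]` for some odd prime `p`. -/
theorem exists_embedding_finite {K : Type*} [Field K] [CharZero K] (F : Finset K) :
    ∃ (p : ℕ) (_ : Fact p.Prime), 2 < p ∧
      ∃ S : Subalgebra ℤ_[p] (AlgebraicClosure ℚ_[p]), Module.Finite ℤ_[p] S ∧
        ∃ φ : Subring.closure (F : Set K) →+* S, Function.Injective φ := by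
  classical
  let A := Algebra.adjoin ℚ (F : Set K)
  have : Algebra.FiniteType ℚ A := (Subalgebra.fg_iff_finiteType _).1 ⟨F, rfl⟩
  have hFA : (F : Set K) ⊆ A := Algebra.subset_adjoin
  obtain ⟨p, hprime, hp, σ, hσ, hint⟩ :=
    exists_embedding_integral (A := A) (F.attach.image fun x : F => ⟨x, hFA x.2⟩)
  let S := Algebra.adjoin ℤ_[p] (Set.range fun x : F => σ ⟨x, hFA x.2⟩)
  have hle : Subring.closure (F : Set K) ≤ A.toSubring := Subring.closure_le.2 hFA
  refine ⟨p, hprime, hp, S, ?_, (σ.comp (Subring.inclusion hle)).codRestrict S ?_, ?_⟩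
  · refine Module.Finite.iff_fg.2 (fg_adjoin_of_finite (Set.finite_range _) ?_)
    rintro _ ⟨x, rfl⟩
    exact hint _ (Finset.mem_image_of_mem _ (Finset.mem_attach _ x))
  · rintro ⟨x, hx⟩
    have h : Subring.closure (F : Set K) ≤ (S.toSubring.comap σ).map A.toSubring.subtype :=
      Subring.closure_le.2 fun z hz =>
        ⟨⟨z, hFA hz⟩, Algebra.subset_adjoin ⟨⟨z, hz⟩, rfl⟩, rfl⟩
    obtain ⟨z, hz, rfl⟩ := h hx
    exact hz
  · intro a b hab
    exact Subring.inclusion_injective hle (hσ (congrArg Subtype.val hab))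

theorem semilinear_of_period {Z : Set ℕ} {N : ℕ} (hN : 0 < N)
    (h : ∀ r, {n | r + N * n ∈ Z}.Infinite → ∀ n, r + N * n ∈ Z) : Semilinear Z := by
  classical
  have hfin : {m ∈ Z | ¬ ∀ n, m % N + N * n ∈ Z}.Finite := by
    refine ((Set.finite_lt_nat N).biUnion (t := fun r =>
      (fun n => r + N * n) '' {n | r + N * n ∈ Z ∧ ¬ ∀ n, r + N * n ∈ Z}) fun r _ => ?_).subset ?_
    · refine Set.Finite.image _ ?_
      by_cases hr : ∀ n, r + N * n ∈ Z
      · simp [hr]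
      · exact (Set.not_infinite.1 (mt (h r) hr)).subset fun n hn => hn.1
    · rintro m ⟨hm, hm'⟩
      simp only [Set.mem_iUnion]
      exact ⟨m % N, Nat.mod_lt _ hN, m / N, ⟨by rwa [Nat.mod_add_div], hm'⟩, Nat.mod_add_div m N⟩
  refine ⟨hfin.toFinset, ((Finset.range N).filter fun r => ∀ n, r + N * n ∈ Z).image (Prod.mk N),
    ?_, ?_⟩
  · simp only [Finset.mem_image]
    rintro _ ⟨r, -, rfl⟩
    exact hN
  · ext m
    simp only [Set.mem_union, Finset.mem_coe, Set.Finite.mem_toFinset, Set.mem_iUnion,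
      Finset.mem_image, Finset.mem_filter, Finset.mem_range, exists_prop, Set.mem_ofPred_eq]
    constructor
    · intro hm
      by_cases hr : ∀ n, m % N + N * n ∈ Z
      · exact .inr ⟨_, ⟨m % N, ⟨Nat.mod_lt _ hN, hr⟩, rfl⟩, m / N, (Nat.div_add_mod m N).symm⟩
      · exact .inl ⟨hm, hr⟩
    · rintro (hm | ⟨_, ⟨r, ⟨-, hr⟩, rfl⟩, k, rfl⟩)
      · exact hm.1
      · rw [add_comm]
        exact hr k

open Matrix in
theorem mulVec_pow_mulVec_map_eq_zero_iff {R S ι : Type*} [CommRing R] [CommRing S] [Fintype ι]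
    [DecidableEq ι] (φ : R →+* S) (hφ : Function.Injective φ) (M Q : Matrix ι ι R) (v : ι → R)
    (n : ℕ) : Q.map φ *ᵥ (M.map φ ^ n *ᵥ (φ ∘ v)) = 0 ↔ Q *ᵥ (M ^ n *ᵥ v) = 0 := by
  have h : Q.map φ *ᵥ (M.map φ ^ n *ᵥ (φ ∘ v)) = φ ∘ (Q *ᵥ (M ^ n *ᵥ v)) := by
    ext i
    rw [Function.comp_apply, RingHom.map_mulVec]
    congr 2
    ext j
    rw [Function.comp_apply, RingHom.map_mulVec, ← RingHom.mapMatrix_apply, ← map_pow]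
    rfl
  rw [h, funext_iff, funext_iff]
  exact forall_congr' fun i => map_eq_zero_iff φ hφ

open Matrix in
/-- **Skolem–Mahler–Lech** for invertible matrices over a field of characteristic zero. -/
theorem semilinear_setOf_mulVec_eq_zero {K : Type*} [Field K] [CharZero K] {ι : Type*} [Fintype ι]
    [DecidableEq ι] (M M' Q : Matrix ι ι K) (hM : M * M' = 1) (v : ι → K) :
    Semilinear {n : ℕ | Q *ᵥ (M ^ n *ᵥ v) = 0} := by
  classical
  let entries (X : Matrix ι ι K) : Finset K := Finset.univ.image fun i : ι × ι => X i.1 i.2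
  let F := entries M ∪ entries M' ∪ entries Q ∪ Finset.univ.image v
  obtain ⟨p, _, hp, S, _, φ, hφ⟩ := exists_embedding_finite F
  let R := Subring.closure (F : Set K)
  have hR (x : K) (hx : x ∈ F) : x ∈ R := Subring.subset_closure hx
  have hentry (X : Matrix ι ι K) (i j : ι) : X i j ∈ entries X :=
    Finset.mem_image_of_mem (fun i : ι × ι => X i.1 i.2) (Finset.mem_univ (i, j))
  let lift (X : Matrix ι ι K) (hX : entries X ⊆ F) : Matrix ι ι R :=
    Matrix.of fun i j => ⟨X i j, hR _ (hX (hentry X i j))⟩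
  let m := lift M fun x hx => by simp [F, hx]
  let m' := lift M' fun x hx => by simp [F, hx]
  let q := lift Q fun x hx => by simp [F, hx]
  let w : ι → R := fun i => ⟨v i, hR _ (by simp [F])⟩
  have hinj : Function.Injective R.subtype := Subtype.val_injective
  have hm : m * m' = 1 := by
    refine Matrix.map_injective hinj ?_
    change R.subtype.mapMatrix (m * m') = R.subtype.mapMatrix 1
    rw [map_mul, map_one]
    exact hM
  have : FaithfulSMul ℤ_[p] S := by
    rw [faithfulSMul_iff_algebraMap_injective]
    refine Function.Injective.of_comp (f := S.val) ?_
    exact (FaithfulSMul.algebraMap_injective ℚ_[p] (AlgebraicClosure ℚ_[p])).comp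
      (FaithfulSMul.algebraMap_injective ℤ_[p] ℚ_[p])
  obtain ⟨N, hN, h⟩ := exists_period_of_padic hp (φ.mapMatrix m) (φ.mapMatrix m') (φ.mapMatrix q)
    (by rw [← map_mul, hm, map_one]) (φ ∘ w)
  refine semilinear_of_period hN fun r => ?_
  have key (n : ℕ) : (φ.mapMatrix q) *ᵥ ((φ.mapMatrix m) ^ n *ᵥ (φ ∘ w)) = 0 ↔
      Q *ᵥ (M ^ n *ᵥ v) = 0 :=
    (mulVec_pow_mulVec_map_eq_zero_iff φ hφ m q w n).trans
      (mulVec_pow_mulVec_map_eq_zero_iff R.subtype hinj m q w n).symm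
  simpa only [key, Set.mem_ofPred_eq] using h r

/-- For a unitary `U` (inner-product-preserving linear map), an orthogonal
projection `P` (idempotent and self-adjoint) and a vector `ψ₀` on a finite-dimensional complex
inner product space, the set `{n | P U^n ψ₀ = 0}` is semilinear. -/
theorem stmt_5 {H : Type*} [NormedAddCommGroup H] [InnerProductSpace ℂ H]
    [FiniteDimensional ℂ H]
    (U : H →ₗ[ℂ] H) (hU : ∀ x y : H, ⟪U x, U y⟫_ℂ = ⟪x, y⟫_ℂ)
    (P : H →ₗ[ℂ] H) (hPidem : P ∘ₗ P = P)
    (hPsa : ∀ x y : H, ⟪P x, y⟫_ℂ = ⟪x, P y⟫_ℂ)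
    (ψ₀ : H) :
    Semilinear {n : ℕ | P ((U ^ n) ψ₀) = 0} := by
  have hinj : Function.Injective U := by
    rw [injective_iff_map_eq_zero]
    intro x hx
    rw [← inner_self_eq_zero (𝕜 := ℂ), ← hU, hx, inner_zero_left]
  let b := Module.finBasis ℂ H
  let V := LinearEquiv.ofInjectiveEndo U hinj
  have hUV : U ∘ₗ (V.symm : H →ₗ[ℂ] H) = LinearMap.id :=
    LinearMap.ext fun x => V.apply_symm_apply x
  have hM : LinearMap.toMatrix b b U * LinearMap.toMatrix b b (V.symm : H →ₗ[ℂ] H) = 1 := by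
    rw [← LinearMap.toMatrix_comp, hUV, LinearMap.toMatrix_id]
  have h := semilinear_setOf_mulVec_eq_zero _ _ (LinearMap.toMatrix b b P) hM (b.repr ψ₀)
  simpa only [LinearMap.toMatrix_pow, LinearMap.toMatrix_mulVec_repr, Finsupp.coe_eq_zero,
    LinearEquiv.map_eq_zero_iff] using h
end

section
/- Let U be a unitary operator on a finite-dimensional complex inner product space H, and let p ≥ 1 be an integer such that for all eigenvalues λ, μ of U, if λ/μ is a root of unity then (λ/μ)^p = 1. Then for every integer n ≥ 1, every eigenvector of U^n is also an eigenvector of U^p; i.e., if v ≠ 0 and U^n v = c v for some complex c, then there exists a complex number c' with U^p v = c' v. -/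
open scoped InnerProductSpace

open Module.End in
/-- If `T ^ n = c` with `c ≠ 0`, then `T` is diagonalizable over `ℂ`. -/
theorem iSup_eigenspace_eq_top_of_pow_eq_algebraMap {V : Type*} [AddCommGroup V] [Module ℂ V]
    [FiniteDimensional ℂ V] {T : Module.End ℂ V} {n : ℕ} (hn : n ≠ 0) {c : ℂ} (hc : c ≠ 0)
    (hT : T ^ n = algebraMap ℂ (Module.End ℂ V) c) : ⨆ μ : ℂ, T.eigenspace μ = ⊤ := by
  have hsq : Squarefree (Polynomial.X ^ n - Polynomial.C c : Polynomial ℂ) :=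
    (Polynomial.separable_X_pow_sub_C c (Nat.cast_ne_zero.mpr hn) hc).squarefree
  exact (isSemisimple_of_squarefree_aeval_eq_zero hsq (by simp [hT])).iSup_eigenspace_eq_top

/-- Let `U` be a unitary operator on a finite-dimensional complex inner
product space and `p ≥ 1` be such that for all eigenvalues `λ, μ` of `U`, if `λ/μ` is a root
of unity then `(λ/μ)^p = 1`. Then for every `n ≥ 1`, every eigenvector of `U^n` is an
eigenvector of `U^p`. -/
theorem stmt_8 {H : Type*} [NormedAddCommGroup H] [InnerProductSpace ℂ H]
    [FiniteDimensional ℂ H]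
    (U : H →ₗ[ℂ] H) (hU : ∀ x y : H, ⟪U x, U y⟫_ℂ = ⟪x, y⟫_ℂ)
    (p : ℕ) (hp : 1 ≤ p)
    (hP : ∀ lam mu : ℂ, Module.End.HasEigenvalue U lam →
      Module.End.HasEigenvalue U mu →
      (∃ m : ℕ, 1 ≤ m ∧ (lam / mu) ^ m = 1) → (lam / mu) ^ p = 1) :
    ∀ n : ℕ, 1 ≤ n → ∀ v : H, v ≠ 0 → ∀ c : ℂ, (U ^ n) v = c • v →
      ∃ c' : ℂ, (U ^ p) v = c' • v := by
  intro n hn v hv c hvc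
  have hn0 : n ≠ 0 := Nat.one_le_iff_ne_zero.mp hn
  have hinj : Function.Injective U := by
    refine (injective_iff_map_eq_zero U).mpr fun x hx => ?_
    have h := hU x x
    rw [hx, inner_zero_left] at h
    exact inner_self_eq_zero.mp h.symm
  have hc : c ≠ 0 := by
    rintro rfl
    have hinj_pow : Function.Injective (U ^ n) := by
      rw [Module.End.coe_pow]
      exact hinj.iterate n
    exact hv (hinj_pow (by rw [hvc, zero_smul, map_zero]))
  let E := Module.End.eigenspace (U ^ n) c
  have hE : ∀ x ∈ E, U x ∈ E := fun x hx =>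
    Module.End.mapsTo_genEigenspace_of_comm ((Commute.refl U).pow_left n) c 1 hx
  let T : Module.End ℂ E := U.restrict hE
  have hT_pow : ∀ (k : ℕ) (x : E), ((T ^ k) x : H) = (U ^ k) x := fun k x => by
    rw [Module.End.pow_restrict k hE, LinearMap.coe_restrict_apply]
  have hTn : T ^ n = algebraMap ℂ (Module.End ℂ E) c := by
    ext x
    rw [hT_pow, Module.End.mem_eigenspace_iff.mp x.2]
    rfl
  have htop := iSup_eigenspace_eq_top_of_pow_eq_algebraMap hn0 hc hTn
  have hvE : v ∈ E := Module.End.mem_eigenspace_iff.mpr hvc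
  have : Nontrivial E := ⟨⟨v, hvE⟩, 0, fun h => hv (congrArg Subtype.val h)⟩
  have heig : ∀ μ, T.HasEigenvalue μ → Module.End.HasEigenvalue U μ ∧ μ ^ n = c := by
    intro μ hμ
    obtain ⟨x, hx⟩ := hμ.exists_hasEigenvector
    refine ⟨Module.End.hasEigenvalue_of_hasEigenvector (x := (x : H))
      ⟨Module.End.mem_eigenspace_iff.mpr (congrArg Subtype.val hx.apply_eq_smul),
        fun h => hx.2 (Subtype.ext h)⟩, ?_⟩
    have h := hx.pow_apply n
    rw [hTn, Module.algebraMap_end_apply] at h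
    exact (smul_left_injective ℂ hx.2 h).symm
  obtain ⟨μ, hμ⟩ := Module.End.exists_eigenvalue T
  have hle : ⨆ ν : ℂ, T.eigenspace ν ≤ (T ^ p).eigenspace (μ ^ p) := by
    refine iSup_le fun ν x hx => ?_
    rcases eq_or_ne x 0 with rfl | hx0
    · exact zero_mem _
    have hxv : T.HasEigenvector ν x := ⟨hx, hx0⟩
    obtain ⟨hUν, hνn⟩ := heig ν (Module.End.hasEigenvalue_of_hasEigenvector hxv)
    obtain ⟨hUμ, hμn⟩ := heig μ hμ
    have hμ0 : μ ≠ 0 := by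
      rintro rfl
      exact hc (by rw [← hμn, zero_pow hn0])
    have h := hP ν μ hUν hUμ ⟨n, hn, by rw [div_pow, hνn, hμn, div_self hc]⟩
    rw [div_pow, div_eq_one_iff_eq (pow_ne_zero p hμ0)] at h
    rw [Module.End.mem_eigenspace_iff, hxv.pow_apply, h]
  have hmem : (⟨v, hvE⟩ : E) ∈ (T ^ p).eigenspace (μ ^ p) :=
    hle (htop ▸ Submodule.mem_top)
  refine ⟨μ ^ p, ?_⟩
  rw [← hT_pow p ⟨v, hvE⟩, Module.End.mem_eigenspace_iff.mp hmem]
  rfl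
end

section
/- Let U be a unitary operator on a finite-dimensional complex inner product space H, and let p ≥ 1 be an integer such that for all eigenvalues λ, μ of U, if λ/μ is a root of unity then (λ/μ)^p = 1. Then for every linear subspace K of H: if U^n K = K for some integer n ≥ 1, then U^p K = K. -/
open scoped InnerProductSpace

section LinearAlgebra

variable {F V : Type*} [Field F] [AddCommGroup V] [Module F V] [FiniteDimensional F V]

/-- An injective endomorphism maps an invariant finite-dimensional subspace onto itself. -/
theorem Submodule.map_eq_self_of_injective_of_map_le {f : V →ₗ[F] V}
    (hf : Function.Injective f) {K : Submodule F V} (h : K.map f ≤ K) : K.map f = K :=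
  Submodule.eq_of_le_of_finrank_eq h (Submodule.equivMapOfInjective f hf K).symm.finrank_eq

/-- If `f` is diagonalizable and `μ ^ p` depends only on `μ ^ n` for eigenvalues `μ` of `f`,
then `f ^ p` is a polynomial in `f ^ n`. -/
theorem Module.End.exists_aeval_pow_eq_pow {f : Module.End F V}
    (hf : ⨆ μ, f.eigenspace μ = ⊤) {n p : ℕ}
    (h : ∀ a b, f.HasEigenvalue a → f.HasEigenvalue b → a ^ n = b ^ n → a ^ p = b ^ p) :
    ∃ q : Polynomial F, Polynomial.aeval (f ^ n) q = f ^ p := by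
  classical
  have hg : ∃ g : F → F, ∀ a, f.HasEigenvalue a → g (a ^ n) = a ^ p := by
    refine ⟨fun z => if hz : ∃ a, f.HasEigenvalue a ∧ a ^ n = z then hz.choose ^ p else 0, ?_⟩
    intro a ha
    have hz : ∃ b, f.HasEigenvalue b ∧ b ^ n = a ^ n := ⟨a, ha, rfl⟩
    simp only [dif_pos hz]
    exact h _ _ hz.choose_spec.1 ha hz.choose_spec.2
  obtain ⟨g, hg⟩ := hg
  have hfin : {a | f.HasEigenvalue a}.Finite := f.finite_hasEigenvalue
  obtain ⟨q, hq⟩ : ∃ q : Polynomial F, ∀ a, f.HasEigenvalue a → q.eval (a ^ n) = a ^ p := by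
    refine ⟨Lagrange.interpolate (hfin.toFinset.image (· ^ n)) id g, fun a ha => ?_⟩
    have hmem : a ^ n ∈ hfin.toFinset.image (· ^ n) :=
      Finset.mem_image_of_mem (· ^ n) (hfin.mem_toFinset.mpr ha)
    rw [← hg a ha]
    exact Lagrange.eval_interpolate_at_node (v := id) (i := a ^ n) g
      Function.injective_id.injOn hmem
  refine ⟨q, sub_eq_zero.mp (LinearMap.ker_eq_top.mp (top_le_iff.mp ?_))⟩
  rw [← hf, iSup_le_iff]
  intro a x hx
  by_cases hx0 : x = 0
  · simp [hx0]
  have ha : f.HasEigenvector a x := ⟨hx, hx0⟩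
  have hpow (k : ℕ) : (f ^ k) x = a ^ k • x := ha.pow_apply k
  have hn : (f ^ n).HasEigenvector (a ^ n) x :=
    ⟨Module.End.mem_eigenspace_iff.mpr (hpow n), hx0⟩
  rw [LinearMap.mem_ker, LinearMap.sub_apply, Module.End.aeval_apply_of_hasEigenvector hn,
    hq a (Module.End.hasEigenvalue_of_hasEigenvector ha), hpow, sub_self]

end LinearAlgebra

section Isometry

variable {H : Type*} [NormedAddCommGroup H] [InnerProductSpace ℂ H]

theorem LinearMap.injective_of_inner_map_map {U : H →ₗ[ℂ] H}
    (hU : ∀ x y : H, ⟪U x, U y⟫_ℂ = ⟪x, y⟫_ℂ) : Function.Injective U := by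
  refine (injective_iff_map_eq_zero U).mpr fun x hx => ?_
  rw [← inner_self_eq_zero (𝕜 := ℂ), ← hU, hx, inner_zero_left]

variable [FiniteDimensional ℂ H]

theorem LinearMap.isSemisimple_of_inner_map_map {U : H →ₗ[ℂ] H}
    (hU : ∀ x y : H, ⟪U x, U y⟫_ℂ = ⟪x, y⟫_ℂ) : Module.End.IsSemisimple U := by
  refine Module.End.isSemisimple_iff.mpr fun K hK =>
    ⟨Kᗮ, ?_, K.isCompl_orthogonal⟩
  have hmap : K.map U = K := Submodule.map_eq_self_of_injective_of_map_le
    (LinearMap.injective_of_inner_map_map hU) (Submodule.map_le_iff_le_comap.mpr hK)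
  intro x hx y hy
  rw [← hmap] at hy
  obtain ⟨z, hz, rfl⟩ := hy
  rw [hU]
  exact hx z hz

theorem LinearMap.iSup_eigenspace_eq_top_of_inner_map_map {U : H →ₗ[ℂ] H}
    (hU : ∀ x y : H, ⟪U x, U y⟫_ℂ = ⟪x, y⟫_ℂ) :
    ⨆ μ, Module.End.eigenspace U μ = ⊤ := by
  rw [← Module.End.iSup_maxGenEigenspace_eq_top U]
  exact iSup_congr fun μ =>
    ((LinearMap.isSemisimple_of_inner_map_map hU).isFinitelySemisimple.maxGenEigenspace_eq_eigenspace
      μ).symm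

end Isometry

/-- Let `U` be a unitary operator on a finite-dimensional complex inner
product space and `p ≥ 1` be such that for all eigenvalues `λ, μ` of `U`, if `λ/μ` is a root
of unity then `(λ/μ)^p = 1`. Then for every subspace `K`: if `U^n K = K` for some `n ≥ 1`,
then `U^p K = K`. -/
theorem stmt_9 {H : Type*} [NormedAddCommGroup H] [InnerProductSpace ℂ H]
    [FiniteDimensional ℂ H]
    (U : H →ₗ[ℂ] H) (hU : ∀ x y : H, ⟪U x, U y⟫_ℂ = ⟪x, y⟫_ℂ)
    (p : ℕ) (hp : 1 ≤ p)
    (hP : ∀ lam mu : ℂ, Module.End.HasEigenvalue U lam →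
      Module.End.HasEigenvalue U mu →
      (∃ m : ℕ, 1 ≤ m ∧ (lam / mu) ^ m = 1) → (lam / mu) ^ p = 1) :
    ∀ K : Submodule ℂ H, (∃ n : ℕ, 1 ≤ n ∧ Submodule.map (U ^ n) K = K) →
      Submodule.map (U ^ p) K = K := by
  rintro K ⟨n, hn, hK⟩
  have hinj := LinearMap.injective_of_inner_map_map hU
  have hne (a : ℂ) (ha : Module.End.HasEigenvalue U a) : a ≠ 0 := by
    rintro rfl
    obtain ⟨x, hx⟩ := ha.exists_hasEigenvector
    exact hx.2 (hinj (by rw [hx.apply_eq_smul, zero_smul, map_zero]))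
  obtain ⟨q, hq⟩ := Module.End.exists_aeval_pow_eq_pow (n := n) (p := p)
    (LinearMap.iSup_eigenspace_eq_top_of_inner_map_map hU) fun a b ha hb hab => by
      have hdiv := hP a b ha hb
        ⟨n, hn, by rw [div_pow, hab, div_self (pow_ne_zero n (hne b hb))]⟩
      rwa [div_pow, div_eq_one_iff_eq (pow_ne_zero p (hne b hb))] at hdiv
  refine Submodule.map_eq_self_of_injective_of_map_le ?_ ?_
  · rw [Module.End.coe_pow]
    exact hinj.iterate p
  · rw [← hq, Submodule.map_le_iff_le_comap]
    exact fun x hx => Polynomial.aeval_apply_smul_mem_of_le_comap hx q _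
      (Submodule.map_le_iff_le_comap.mp hK.le)
end

section
/- Let U be a unitary operator on a finite-dimensional complex inner product space H, K a linear subspace of H, and let p ≥ 1 satisfy: for all eigenvalues λ, μ of U, if λ/μ is a root of unity then (λ/μ)^p = 1. For q ≥ 1 let K_q = {ψ ∈ H | U^{n q} ψ ∈ K for all n ≥ 0}. Then for every integer a ≥ 1, K_a ⊆ K_p. -/
open scoped InnerProductSpace

/-- An inner-product-preserving endomorphism of a finite-dimensional space is semisimple. -/
lemma Module.End.isSemisimple_of_inner_map_map {𝕜 H : Type*} [RCLike 𝕜] [NormedAddCommGroup H]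
    [InnerProductSpace 𝕜 H] [FiniteDimensional 𝕜 H] (U : Module.End 𝕜 H)
    (hU : ∀ x y : H, ⟪U x, U y⟫_𝕜 = ⟪x, y⟫_𝕜) : U.IsSemisimple := by
  have hinj : Function.Injective U := (LinearMap.isometryOfInner U hU).injective
  rw [Module.End.isSemisimple_iff]
  intro V hV
  refine ⟨Vᗮ, fun x hx => ?_, Submodule.isCompl_orthogonal V⟩
  have hsurj : Function.Surjective (U.restrict hV) :=
    LinearMap.injective_iff_surjective.mp fun v w h =>
      Subtype.ext (hinj (congrArg Subtype.val h))
  rw [Submodule.mem_comap, Submodule.mem_orthogonal]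
  intro v hv
  obtain ⟨w, hw⟩ := hsurj ⟨v, hv⟩
  obtain rfl : U w = v := congrArg Subtype.val hw
  rw [hU]
  exact hx w w.2

/-- A function on a set `s` that factors through `v` is, on a finite set `s`, given by a polynomial
in `v`. -/
lemma Polynomial.exists_eval_eq_of_factorsOn {ι F : Type*} [Field F] {s : Set ι} (hs : s.Finite)
    (v r : ι → F) (h : ∀ i ∈ s, ∀ j ∈ s, v i = v j → r i = r j) :
    ∃ f : Polynomial F, ∀ i ∈ s, f.eval (v i) = r i := by
  classical
  have hg : ∀ c ∈ v '' s, ∃ y, ∀ i ∈ s, v i = c → r i = y := by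
    rintro _ ⟨i, hi, rfl⟩
    exact ⟨r i, fun j hj hji => h j hj i hi hji⟩
  choose! g hg using hg
  refine ⟨Lagrange.interpolate (hs.image v).toFinset id g, fun i hi => ?_⟩
  have hvi : v i ∈ v '' s := Set.mem_image_of_mem v hi
  have := Lagrange.eval_interpolate_at_node (v := id) g Function.injective_id.injOn
    ((hs.image v).mem_toFinset.mpr hvi)
  rw [hg _ hvi i hi rfl]
  exact this

/-- If the eigenspaces of `U` span, and `λ ^ a` determines `λ ^ p` for eigenvalues `λ` of `U`, then
`U ^ p` is a polynomial in `U ^ a`. -/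
lemma Module.End.exists_aeval_pow_eq_pow_s12 {F V : Type*} [Field F] [AddCommGroup V] [Module F V]
    [FiniteDimensional F V] (U : Module.End F V) (hU : ⨆ μ, U.eigenspace μ = ⊤) (a p : ℕ)
    (h : ∀ μ ν, U.HasEigenvalue μ → U.HasEigenvalue ν → μ ^ a = ν ^ a → μ ^ p = ν ^ p) :
    ∃ f : Polynomial F, Polynomial.aeval (U ^ a) f = U ^ p := by
  obtain ⟨f, hf⟩ := Polynomial.exists_eval_eq_of_factorsOn (s := {μ | U.HasEigenvalue μ})
    (Module.End.finite_hasEigenvalue U) (· ^ a) (· ^ p)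
    fun μ hμ ν hν => h μ ν hμ hν
  refine ⟨f, LinearMap.ext fun x => ?_⟩
  have hx : x ∈ ⨆ μ, U.eigenspace μ := hU ▸ Submodule.mem_top
  induction hx using Submodule.iSup_induction' with
  | zero => simp
  | add x y _ _ hx hy => rw [map_add, map_add, hx, hy]
  | mem μ x hx =>
    obtain rfl | hx0 := eq_or_ne x 0
    · simp
    have hev : U.HasEigenvector μ x := ⟨hx, hx0⟩
    have hpow : (U ^ a).HasEigenvector (μ ^ a) x :=
      ⟨Module.End.mem_eigenspace_iff.mpr (hev.pow_apply a), hx0⟩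
    rw [Module.End.aeval_apply_of_hasEigenvector hpow, hev.pow_apply p]
    exact congrArg (· • x) (hf μ (Module.End.hasEigenvalue_of_hasEigenvector hev))

/-- A subspace containing the forward orbit of `x` under `T` contains `f(T) x` for all polynomials
`f`. -/
lemma Submodule.aeval_apply_mem_of_forall_pow {R M : Type*} [CommRing R] [AddCommGroup M]
    [Module R M] (K : Submodule R M) (T : Module.End R M) {x : M}
    (hx : ∀ n : ℕ, (T ^ n) x ∈ K) (f : Polynomial R) : Polynomial.aeval T f x ∈ K := by
  rw [Polynomial.aeval_endomorphism]
  exact K.sum_mem fun n _ => K.smul_mem _ (hx n)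

/-- Let `U` be a unitary operator on a finite-dimensional complex inner
product space, `K` a subspace, and `p ≥ 1` such that for all eigenvalues `λ, μ` of `U`, if
`λ/μ` is a root of unity then `(λ/μ)^p = 1`. With `K_q = {ψ | U^{n q} ψ ∈ K for all n ≥ 0}`,
we have `K_a ⊆ K_p` for every `a ≥ 1`. -/
theorem stmt_12 {H : Type*} [NormedAddCommGroup H] [InnerProductSpace ℂ H]
    [FiniteDimensional ℂ H]
    (U : H →ₗ[ℂ] H) (hU : ∀ x y : H, ⟪U x, U y⟫_ℂ = ⟪x, y⟫_ℂ)
    (K : Submodule ℂ H)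
    (p : ℕ) (hp : 1 ≤ p)
    (hP : ∀ lam mu : ℂ, Module.End.HasEigenvalue U lam →
      Module.End.HasEigenvalue U mu →
      (∃ m : ℕ, 1 ≤ m ∧ (lam / mu) ^ m = 1) → (lam / mu) ^ p = 1) :
    ∀ a : ℕ, 1 ≤ a →
      {ψ : H | ∀ n : ℕ, (U ^ (n * a)) ψ ∈ K} ⊆ {ψ : H | ∀ n : ℕ, (U ^ (n * p)) ψ ∈ K} := by
  intro a ha ψ hψ n
  have hne : ∀ μ, Module.End.HasEigenvalue U μ → μ ≠ 0 := by
    rintro _ hμ rfl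
    obtain ⟨v, hv⟩ := hμ.exists_hasEigenvector
    refine hv.2 ((LinearMap.isometryOfInner U hU).injective ?_)
    simpa using hv.apply_eq_smul
  obtain ⟨f, hf⟩ := Module.End.exists_aeval_pow_eq_pow_s12 U
    (Module.End.isSemisimple_of_inner_map_map U hU).iSup_eigenspace_eq_top a p
    fun μ ν hμ hν h => by
      have hν0 := hne ν hν
      have := hP μ ν hμ hν ⟨a, ha, by rw [div_pow, h, div_self (pow_ne_zero a hν0)]⟩
      rwa [div_pow, div_eq_one_iff_eq (pow_ne_zero p hν0)] at this
  rw [mul_comm, pow_mul, ← hf, ← map_pow]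
  refine K.aeval_apply_mem_of_forall_pow _ (fun m => ?_) _
  rw [← pow_mul, mul_comm]
  exact hψ m
end

section
/- Let N ≥ 2, let x ∈ {0, 1, …, N−1}, let ψ₀ = (1/√N) Σ_{k=0}^{N−1} e_k be the uniform superposition in ℂ^N (with standard orthonormal basis e_0, …, e_{N−1}), and let G = (2|ψ₀⟩⟨ψ₀| − I)(2|e_x⟩⟨e_x| − I) be the product of the reflection about ψ₀ with the reflection about e_x. Then the characteristic polynomial of G equals (λ − 1)^{N−2} (λ² + 2(1 − 2/N)λ + 1). -/
open Polynomial Matrix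

/-- The characteristic polynomial of a product of two reflections `2 |u⟩⟨u'| - 1` and
`2 |v⟩⟨v'| - 1`, where `⟨u', u⟩ = ⟨v', v⟩ = 1`. -/
theorem charpoly_reflection_mul_reflection {R n : Type*} [CommRing R] [Nontrivial R] [Fintype n]
    [DecidableEq n] (hn : 2 ≤ Fintype.card n) (u u' v v' : n → R)
    (hu : u' ⬝ᵥ u = 1) (hv : v' ⬝ᵥ v = 1) :
    ((2 • vecMulVec u u' - 1) * (2 • vecMulVec v v' - 1)).charpoly =
      (X - 1) ^ (Fintype.card n - 2) *
        (X ^ 2 + C (2 - 4 * ((u' ⬝ᵥ v) * (v' ⬝ᵥ u))) * X + 1) := by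
  set A : Matrix n (Fin 2) R := (of ![u, v])ᵀ with hA
  set B : Matrix (Fin 2) n R :=
    of ![(4 * (u' ⬝ᵥ v)) • v' - (2 : R) • u', -((2 : R) • v')] with hB
  have hG : (2 • vecMulVec u u' - 1) * (2 • vecMulVec v v' - 1) = A * B - scalar n (-1) := by
    simp only [sub_mul, mul_sub, smul_mul_assoc, mul_smul_comm, vecMulVec_mul_vecMulVec]
    ext i j
    simp [-nsmul_eq_mul, hA, hB, mul_apply, Fin.sum_univ_two, vecMulVec_apply, one_apply,
      Matrix.diagonal_apply]
    split_ifs <;> ring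
  have hBA : B * A = !![4 * ((u' ⬝ᵥ v) * (v' ⬝ᵥ u)) - 2, 2 * (u' ⬝ᵥ v); -2 * (v' ⬝ᵥ u), -2] := by
    have h (i j) : (B * A) i j =
        ![(4 * (u' ⬝ᵥ v)) • v' - (2 : R) • u', -((2 : R) • v')] i ⬝ᵥ ![u, v] j := rfl
    ext i j
    rw [h]
    fin_cases i <;> fin_cases j <;>
      simp [sub_dotProduct, smul_dotProduct, neg_dotProduct, hu, hv] <;> ring
  rw [hG, charpoly_sub_scalar, charpoly_mul_comm_of_le _ _ (by simpa using hn), hBA,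
    charpoly_fin_two]
  simp [trace_fin_two, det_fin_two, map_ofNat C]
  ring

/-- Let `ψ₀` be the uniform superposition in `ℂ^N`, `x` a marked index, and
`G = (2|ψ₀⟩⟨ψ₀| − I)(2|e_x⟩⟨e_x| − I)` (the Grover iteration up to a global sign), realized as
an `N × N` complex matrix, where `|v⟩⟨v|` is the matrix `v ᵥ* (star v)`. Then the
characteristic polynomial of `G` equals `(λ − 1)^{N−2} (λ² + 2(1 − 2/N) λ + 1)`. -/
theorem stmt_15 (N : ℕ) (hN : 2 ≤ N) (x : Fin N)
    (ψ₀ : Fin N → ℂ) (hψ₀ : ψ₀ = fun _ => (1 : ℂ) / (Real.sqrt N : ℂ))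
    (G : Matrix (Fin N) (Fin N) ℂ)
    (hG : G = (2 • vecMulVec ψ₀ (star ψ₀) - 1) *
              (2 • vecMulVec (Pi.single x 1) (star (Pi.single x (1 : ℂ))) - 1)) :
    G.charpoly = (X - 1) ^ (N - 2) *
      (X ^ 2 + C (2 * (1 - 2 / (N : ℂ))) * X + 1) := by
  have hs : ((Real.sqrt N : ℝ) : ℂ) * (Real.sqrt N : ℝ) = N := by
    rw [← Complex.ofReal_mul, Real.mul_self_sqrt N.cast_nonneg, Complex.ofReal_natCast]
  have hN0 : (N : ℂ) ≠ 0 := by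
    exact_mod_cast (by omega : N ≠ 0)
  have hinv : ((Real.sqrt N : ℝ) : ℂ)⁻¹ * ((Real.sqrt N : ℝ) : ℂ)⁻¹ = (N : ℂ)⁻¹ := by
    rw [← mul_inv, hs]
  have hstar : star ψ₀ = ψ₀ := by
    ext; simp [hψ₀]
  have hsingle : star (Pi.single x (1 : ℂ)) = (Pi.single x 1 : Fin N → ℂ) := by
    rw [← Pi.single_star, star_one]
  have hu : ψ₀ ⬝ᵥ ψ₀ = 1 := by
    simp [hψ₀, dotProduct, hinv, hN0]
  rw [hG, hstar, hsingle, charpoly_reflection_mul_reflection (by simpa using hN) _ _ _ _ hu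
    (by simp), Fintype.card_fin]
  congr 5
  simp only [hψ₀, dotProduct_single_one, single_one_dotProduct, one_div, hinv]
  ring
end

section
/- Let N > 4, let x ∈ {0, 1, …, N−1}, let ψ₀ = (1/√N) Σ_{k=0}^{N−1} e_k in ℂ^N, and let G = (2|ψ₀⟩⟨ψ₀| − I)(2|e_x⟩⟨e_x| − I). Then for any two eigenvalues λ and μ of G, if (λ/μ)^n = 1 for some integer n ≥ 1 then λ = μ. (Consequently the integer p in the debugging construction equals 1 for this process.) -/
open Polynomial Matrix

/-- A root of the characteristic polynomial of a matrix over a field has an eigenvector. -/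
lemma exists_mulVec_eq_smul_of_isRoot_charpoly {K ι : Type*} [Field K] [Fintype ι] [DecidableEq ι]
    {A : Matrix ι ι K} {lam : K} (h : A.charpoly.IsRoot lam) :
    ∃ v : ι → K, v ≠ 0 ∧ A *ᵥ v = lam • v := by
  rw [Polynomial.IsRoot.def, Matrix.eval_charpoly] at h
  obtain ⟨v, hv, hAv⟩ := Matrix.exists_mulVec_eq_zero_iff.2 h
  refine ⟨v, hv, ?_⟩
  rw [Matrix.sub_mulVec, sub_eq_zero] at hAv
  rw [← hAv]
  ext i
  simp [Matrix.scalar_apply, Matrix.mulVec_diagonal]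

/-- The action of the Grover operator in coordinates. -/
lemma grover_mulVec_apply {N : ℕ} (x : Fin N) (v : Fin N → ℂ) (i : Fin N) :
    (((2 • vecMulVec (fun _ : Fin N => (1 : ℂ) / (Real.sqrt N : ℂ))
          (star fun _ : Fin N => (1 : ℂ) / (Real.sqrt N : ℂ)) - 1) *
        (2 • vecMulVec (Pi.single x 1) (star (Pi.single x (1 : ℂ))) - 1)) *ᵥ v) i =
      2 / N * (2 * v x - ∑ j, v j) - (2 * v x * (Pi.single x 1 : Fin N → ℂ) i - v i) := by
  have hsqrt : ((Real.sqrt N : ℂ))⁻¹ * ((Real.sqrt N : ℂ))⁻¹ = (N : ℂ)⁻¹ := by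
    rw [← mul_inv, ← Complex.ofReal_mul, Real.mul_self_sqrt (Nat.cast_nonneg N),
      Complex.ofReal_natCast]
  have hQ : (2 • vecMulVec (Pi.single x 1) (star (Pi.single x (1 : ℂ))) - 1) *ᵥ v =
      fun j => 2 * v x * (Pi.single x 1 : Fin N → ℂ) j - v j := by
    ext j
    rw [Matrix.sub_mulVec, Matrix.smul_mulVec, Matrix.vecMulVec_mulVec]
    simp
    ring
  rw [← Matrix.mulVec_mulVec, hQ]
  simp only [Matrix.sub_mulVec, Matrix.smul_mulVec, Matrix.vecMulVec_mulVec, Matrix.one_mulVec,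
    Pi.sub_apply, Pi.smul_apply, dotProduct, Pi.star_apply, ← Finset.mul_sum,
    Finset.sum_sub_distrib, Finset.sum_pi_single', Finset.mem_univ, if_true]
  simp
  linear_combination (2 * (2 * v x - ∑ j, v j)) * hsqrt

/-- An eigenvalue of the Grover operator is `1` or a root of `N (z + 1) ^ 2 = 4 z`. -/
lemma grover_eigenvalue {N : ℕ} (hN : N ≠ 0) (x : Fin N) {v : Fin N → ℂ} (hv : v ≠ 0) {lam : ℂ}
    (h : ∀ i, 2 / N * (2 * v x - ∑ j, v j) - (2 * v x * (Pi.single x 1 : Fin N → ℂ) i - v i) =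
      lam * v i) :
    lam = 1 ∨ N * (lam + 1) ^ 2 = 4 * lam := by
  have hN' : (N : ℂ) ≠ 0 := Nat.cast_ne_zero.2 hN
  have hx := h x
  rw [Pi.single_eq_same] at hx
  have hsum : ∑ i, (2 / N * (2 * v x - ∑ j, v j) -
      (2 * v x * (Pi.single x 1 : Fin N → ℂ) i - v i)) = ∑ i, lam * v i :=
    Finset.sum_congr rfl fun i _ => h i
  simp only [Finset.sum_sub_distrib, ← Finset.mul_sum, Finset.sum_const, Finset.card_univ,
    Fintype.card_fin, nsmul_eq_mul, Finset.sum_pi_single', Finset.mem_univ, if_true] at hsum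
  set s := ∑ j, v j with hs
  field_simp at hx hsum
  by_cases hs0 : s = 0
  · have ha : v x = 0 := by
      rw [hs0] at hsum
      linear_combination hsum / 2
    obtain ⟨i, hi⟩ := Function.ne_iff.1 hv
    left
    have := h i
    rw [hs0, ha] at this
    refine mul_right_cancel₀ hi ?_
    linear_combination -this
  · right
    refine mul_right_cancel₀ hs0 ?_
    linear_combination (-2) * hx + (4 - N * (lam + 1)) * hsum

/-- For `N > 4`, a root of `N (z + 1) ^ 2 = 4 z` is not a root of unity: otherwise
`4 / N = z + z⁻¹ + 2` would be an algebraic integer. -/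
lemma pow_ne_one_of_grover_eq {N : ℕ} (hN : 4 < N) {z : ℂ} (hz : N * (z + 1) ^ 2 = 4 * z)
    {n : ℕ} (hn : 1 ≤ n) : z ^ n ≠ 1 := by
  intro h
  have hN' : (N : ℂ) ≠ 0 := Nat.cast_ne_zero.2 (by omega)
  have hz0 : z ≠ 0 := by
    rintro rfl
    simp [hN'] at hz
  have hint : ∀ w : ℂ, w ^ n = 1 → IsIntegral ℤ w := fun w hw =>
    IsIntegral.of_pow hn (hw ▸ isIntegral_one)
  have hsum : IsIntegral ℤ (z + z⁻¹ + 1 + 1) :=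
    (((hint z h).add (hint z⁻¹ (by rw [inv_pow, h, inv_one]))).add isIntegral_one).add
      isIntegral_one
  have heq : z + z⁻¹ + 1 + 1 = algebraMap ℚ ℂ (4 / N) := by
    simp only [map_div₀, map_ofNat, map_natCast]
    field_simp
    linear_combination hz
  rw [heq, isIntegral_algebraMap_iff (algebraMap ℚ ℂ).injective,
    IsIntegrallyClosed.isIntegral_iff] at hsum
  obtain ⟨m, hm⟩ := hsum
  have hNQ : (N : ℚ) ≠ 0 := Nat.cast_ne_zero.2 (by omega)
  rw [eq_div_iff hNQ, eq_intCast] at hm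
  have hm' : m * (N : ℤ) = 4 := by exact_mod_cast hm
  have := Int.le_of_dvd (by norm_num) (Dvd.intro_left m hm')
  omega

/-- For `N > 4`, let `G = (2|ψ₀⟩⟨ψ₀| − I)(2|e_x⟩⟨e_x| − I)` be the Grover
iteration (up to a global sign) on `ℂ^N`, realized as an `N × N` complex matrix. Then for any
two eigenvalues `λ, μ` of `G` (roots of its characteristic polynomial), if `(λ/μ)^n = 1` for
some `n ≥ 1` then `λ = μ`. -/
theorem stmt_16 (N : ℕ) (hN : 4 < N) (x : Fin N)
    (ψ₀ : Fin N → ℂ) (hψ₀ : ψ₀ = fun _ => (1 : ℂ) / (Real.sqrt N : ℂ))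
    (G : Matrix (Fin N) (Fin N) ℂ)
    (hG : G = (2 • vecMulVec ψ₀ (star ψ₀) - 1) *
              (2 • vecMulVec (Pi.single x 1) (star (Pi.single x (1 : ℂ))) - 1)) :
    ∀ lam mu : ℂ, G.charpoly.IsRoot lam → G.charpoly.IsRoot mu →
      (∃ n : ℕ, 1 ≤ n ∧ (lam / mu) ^ n = 1) → lam = mu := by
  have key : ∀ z : ℂ, G.charpoly.IsRoot z → z = 1 ∨ N * (z + 1) ^ 2 = 4 * z := by
    intro z hz
    obtain ⟨v, hv, hGv⟩ := exists_mulVec_eq_smul_of_isRoot_charpoly hz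
    refine grover_eigenvalue (by omega) x hv fun i => ?_
    rw [← grover_mulVec_apply, ← hψ₀, ← hG, hGv, Pi.smul_apply, smul_eq_mul]
  rintro lam mu hlam hmu ⟨n, hn, hpow⟩
  rcases key lam hlam with rfl | hl <;> rcases key mu hmu with rfl | hm
  · rfl
  · refine absurd ?_ (pow_ne_one_of_grover_eq hN hm hn)
    simpa using hpow
  · refine absurd ?_ (pow_ne_one_of_grover_eq hN hl hn)
    simpa using hpow
  · by_contra hne
    have hN' : (N : ℂ) ≠ 0 := Nat.cast_ne_zero.2 (by omega)
    have hprod : lam * mu = 1 := by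
      refine mul_left_cancel₀ (mul_ne_zero hN' (sub_ne_zero.2 hne)) ?_
      linear_combination mu * hl - lam * hm
    refine pow_ne_one_of_grover_eq hN hl (n := 2 * n) (by omega) ?_
    rw [pow_mul, ← hpow, div_eq_mul_inv, inv_eq_of_mul_eq_one_left hprod, sq]
end

section
/- Let N ≥ 2, let x ∈ {0, 1, …, N−1}, let ψ₀ = (1/√N) Σ_{k=0}^{N−1} e_k in ℂ^N, let ξ = (1/√(N−1)) Σ_{k ≠ x} e_k, and let G = (2|ψ₀⟩⟨ψ₀| − I)(2|e_x⟩⟨e_x| − I). Then the linear span of the orbit {G^n ψ₀ : n ∈ ℕ} equals the two-dimensional subspace span{e_x, ξ}. In particular, the projection P = I − |e_x⟩⟨e_x| − |ξ⟩⟨ξ| satisfies P G^n ψ₀ = 0 for every n ∈ ℕ. -/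
open Matrix

/-- If `span {e, ψ}` is invariant under `G` and `G *ᵥ ψ` has a nonzero `e`-component, then the
orbit of `ψ` under `G` spans `span {e, ψ}`. -/
theorem span_orbit_eq_span_pair {ι K : Type*} [Fintype ι] [DecidableEq ι] [Field K]
    {G : Matrix ι ι K} {e ψ : ι → K} {c d p q : K} (hd : d ≠ 0)
    (hGψ : G *ᵥ ψ = c • ψ + d • e) (hGe : G *ᵥ e = p • ψ + q • e) :
    Submodule.span K {v : ι → K | ∃ n : ℕ, v = (G ^ n) *ᵥ ψ} = Submodule.span K {e, ψ} := by
  apply le_antisymm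
  · rw [Submodule.span_le]
    rintro _ ⟨n, rfl⟩
    induction n with
    | zero => simpa using Submodule.subset_span (by simp)
    | succ n ih =>
      obtain ⟨s, t, hst⟩ := Submodule.mem_span_pair.1 ih
      refine Submodule.mem_span_pair.2 ⟨s * q + t * d, s * p + t * c, ?_⟩
      rw [pow_succ', ← mulVec_mulVec, ← hst, mulVec_add, mulVec_smul, mulVec_smul, hGψ, hGe]
      module
  · have hψ : ψ ∈ Submodule.span K {v : ι → K | ∃ n : ℕ, v = (G ^ n) *ᵥ ψ} :=
      Submodule.subset_span ⟨0, by simp⟩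
    have hG : G *ᵥ ψ ∈ Submodule.span K {v : ι → K | ∃ n : ℕ, v = (G ^ n) *ᵥ ψ} :=
      Submodule.subset_span ⟨1, by simp⟩
    have he : e = d⁻¹ • (G *ᵥ ψ - c • ψ) := by
      rw [hGψ, add_sub_cancel_left, inv_smul_smul₀ hd]
    rw [Submodule.span_le, Set.pair_subset_iff]
    refine ⟨?_, hψ⟩
    rw [he]
    exact Submodule.smul_mem _ _ (Submodule.sub_mem _ hG (Submodule.smul_mem _ _ hψ))

theorem span_pair_linear_combination {K V : Type*} [Field K] [AddCommGroup V] [Module K V]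
    {a b : K} (hb : b ≠ 0) (e ξ : V) :
    Submodule.span K {e, a • e + b • ξ} = Submodule.span K {e, ξ} := by
  apply le_antisymm <;> rw [Submodule.span_le, Set.pair_subset_iff] <;>
    refine ⟨Submodule.subset_span (by simp), Submodule.mem_span_pair.2 ?_⟩
  · exact ⟨a, b, rfl⟩
  · refine ⟨-(b⁻¹ * a), b⁻¹, ?_⟩
    rw [smul_add, inv_smul_smul₀ hb]
    module

/-- The product of the reflections `2|ψ⟩⟨ψ| − 1` and `2|e⟩⟨e| − 1` applied to a vector. -/
theorem reflection_mul_reflection_mulVec {ι : Type*} [Fintype ι] [DecidableEq ι]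
    (ψ e v : ι → ℂ) :
    ((2 • vecMulVec ψ (star ψ) - 1) * (2 • vecMulVec e (star e) - 1)) *ᵥ v =
      (4 * (star e ⬝ᵥ v) * (star ψ ⬝ᵥ e) - 2 * (star ψ ⬝ᵥ v)) • ψ -
        (2 * (star e ⬝ᵥ v)) • e + v := by
  have h (u w : ι → ℂ) : (2 • vecMulVec u (star u) - 1) *ᵥ w = (2 * (star u ⬝ᵥ w)) • u - w := by
    rw [sub_mulVec, one_mulVec, smul_mulVec, vecMulVec_mulVec, op_smul_eq_smul]
    module
  rw [← mulVec_mulVec, h, h, dotProduct_sub, dotProduct_smul, smul_eq_mul]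
  module

/-- Let `ψ₀` be the uniform superposition in `ℂ^N`, `x` a marked index,
`ξ = (1/√(N−1)) Σ_{k ≠ x} e_k`, and `G = (2|ψ₀⟩⟨ψ₀| − I)(2|e_x⟩⟨e_x| − I)` the Grover
iteration (up to a global sign) as an `N × N` complex matrix. Then the span of the orbit
`{G^n ψ₀ : n ∈ ℕ}` equals `span{e_x, ξ}`, and the projection
`P = I − |e_x⟩⟨e_x| − |ξ⟩⟨ξ|` satisfies `P G^n ψ₀ = 0` for all `n`. -/
theorem stmt_17 (N : ℕ) (hN : 2 ≤ N) (x : Fin N)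
    (ψ₀ : Fin N → ℂ) (hψ₀ : ψ₀ = fun _ => (1 : ℂ) / (Real.sqrt N : ℂ))
    (ξ : Fin N → ℂ)
    (hξ : ξ = fun k => if k = x then 0 else (1 : ℂ) / (Real.sqrt (N - 1) : ℂ))
    (G : Matrix (Fin N) (Fin N) ℂ)
    (hG : G = (2 • vecMulVec ψ₀ (star ψ₀) - 1) *
              (2 • vecMulVec (Pi.single x 1) (star (Pi.single x (1 : ℂ))) - 1))
    (P : Matrix (Fin N) (Fin N) ℂ)
    (hP : P = 1 - vecMulVec (Pi.single x 1) (star (Pi.single x (1 : ℂ)))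
            - vecMulVec ξ (star ξ)) :
    Submodule.span ℂ {v : Fin N → ℂ | ∃ n : ℕ, v = (G ^ n) *ᵥ ψ₀} =
      Submodule.span ℂ {Pi.single x (1 : ℂ), ξ} ∧
    ∀ n : ℕ, P *ᵥ ((G ^ n) *ᵥ ψ₀) = 0 := by
  have hN0 : (0 : ℝ) < N := by positivity
  have hN1 : (0 : ℝ) < N - 1 := by
    have : (2 : ℝ) ≤ N := by exact_mod_cast hN
    linarith
  set r : ℂ := (Real.sqrt N : ℂ) with hr
  set s : ℂ := (Real.sqrt (N - 1) : ℂ) with hs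
  have hr0 : r ≠ 0 := by simpa [hr] using (Real.sqrt_pos.2 hN0).ne'
  have hs0 : s ≠ 0 := Complex.ofReal_ne_zero.2 (Real.sqrt_pos.2 hN1).ne'
  have hrr : r * r = N := by
    rw [hr, ← Complex.ofReal_mul, Real.mul_self_sqrt hN0.le, Complex.ofReal_natCast]
  have hss : s * s = N - 1 := by
    rw [hs, ← Complex.ofReal_mul, Real.mul_self_sqrt hN1.le]
    push_cast
    rfl
  have hr_star : star r = r := Complex.conj_ofReal _
  have hs_star : star s = s := Complex.conj_ofReal _
  set e : Fin N → ℂ := Pi.single x 1 with he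
  have he_star : star e = e := by rw [he, Pi.star_single, star_one]
  have hψ_star : star ψ₀ = ψ₀ := by
    ext k
    simp only [hψ₀, Pi.star_apply, star_div₀, star_one, hr_star]
  have hξ_star : star ξ = ξ := by
    ext k
    simp only [hξ, Pi.star_apply, apply_ite star, star_zero, star_div₀, star_one, hs_star]
  have hee : e ⬝ᵥ e = 1 := by simp [he]
  have heψ : e ⬝ᵥ ψ₀ = 1 / r := by simp [he, hψ₀]
  have hψe : ψ₀ ⬝ᵥ e = 1 / r := by rw [dotProduct_comm, heψ]
  have heξ : e ⬝ᵥ ξ = 0 := by simp [he, hξ]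
  have hξe : ξ ⬝ᵥ e = 0 := by rw [dotProduct_comm, heξ]
  have hψψ : ψ₀ ⬝ᵥ ψ₀ = 1 := by
    simp only [hψ₀, dotProduct, Finset.sum_const, Finset.card_univ, Fintype.card_fin,
      nsmul_eq_mul, ← hrr]
    field_simp
  have hψ_decomp : ψ₀ = (1 / r) • e + (s / r) • ξ := by
    ext k
    by_cases hk : k = x
    · simp [hψ₀, hξ, he, hk]
    · simp [hψ₀, hξ, he, hk]
      field_simp
  have hξξ : ξ ⬝ᵥ ξ = 1 := by
    have h := hψψ
    rw [hψ_decomp] at h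
    simp only [add_dotProduct, dotProduct_add, smul_dotProduct, dotProduct_smul, hee, heξ, hξe,
      smul_eq_mul] at h
    field_simp at h
    have h' : s * s * (ξ ⬝ᵥ ξ) = s * s := by linear_combination h + hrr - hss
    exact mul_left_cancel₀ (mul_ne_zero hs0 hs0) (h'.trans (mul_one _).symm)
  have hGψ : G *ᵥ ψ₀ = (4 * (1 / r) * (1 / r) - 1) • ψ₀ + (-(2 * (1 / r))) • e := by
    rw [hG, reflection_mul_reflection_mulVec, he_star, hψ_star, heψ, hψe, hψψ]
    module
  have hGe : G *ᵥ e = (2 * (1 / r)) • ψ₀ + (-1 : ℂ) • e := by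
    rw [hG, reflection_mul_reflection_mulVec, he_star, hψ_star, hψe, hee]
    module
  have hspan : Submodule.span ℂ {v : Fin N → ℂ | ∃ n : ℕ, v = (G ^ n) *ᵥ ψ₀} =
      Submodule.span ℂ {e, ξ} := by
    rw [span_orbit_eq_span_pair (by simpa using hr0) hGψ hGe, hψ_decomp,
      span_pair_linear_combination (div_ne_zero hs0 hr0)]
  refine ⟨hspan, fun n => ?_⟩
  have hmem : (G ^ n) *ᵥ ψ₀ ∈ Submodule.span ℂ {e, ξ} :=
    hspan ▸ Submodule.subset_span ⟨n, rfl⟩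
  obtain ⟨a, b, hab⟩ := Submodule.mem_span_pair.1 hmem
  rw [← hab, hP, sub_mulVec, sub_mulVec, one_mulVec, vecMulVec_mulVec, vecMulVec_mulVec, he_star,
    hξ_star]
  simp [dotProduct_add, dotProduct_smul, hee, heξ, hξe, hξξ]
end
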